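/- Let n ≥ 2, 1 ≤ m ≤ n−1, a = (a_1,…,a_n) ∈ ℂ^n and a' = (a'_1,…,a'_m) ∈ ℂ^m with every a_j and a'_k purely imaginary, and let s ∈ ℂ with Re(s) > 0. Then I_{n,m;a,a'}(s) = (2^m/(2πi)^{n−2})·∫_{s_1,…,s_{m−1}, s_{m+1},…,s_{n−1}} U_{n,a}(s−s_1, 2s−s_2, …, (m−1)s−s_{m−1}, m·s+|a'|, s_{m+1},…,s_{n−1})·U_{m,a'}(s_1,…,s_{m−1}) ds_1⋯ds_{m−1}·ds_{m+1}⋯ds_{n−1}. -/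

import Mathlib

open MeasureTheory Complex

noncomputable section

/-- `Γ_ℝ(s) = π^{-s/2} Γ(s/2)`. -/
def GammaR (s : ℂ) : ℂ := (Real.pi : ℂ) ^ (-s / 2) * Complex.Gamma (s / 2)

/-- Modified Bessel function of the second kind, via its integral representation. -/
def BesselK (ν : ℂ) (y : ℝ) : ℂ :=
  (1 / 2) * ∫ t in Set.Ioi (0 : ℝ),
    Complex.exp (-((y : ℂ) / 2) * ((t : ℂ) + 1 / (t : ℂ))) * (t : ℂ) ^ ν / (t : ℂ)

/-- Extend a finite real tuple to `ℕ`, defaulting to `1`. -/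
def extR {k : ℕ} (t : Fin k → ℝ) : ℕ → ℝ := fun i => if h : i < k then t ⟨i, h⟩ else 1

/-- Extend a finite real tuple to `ℕ`, defaulting to `0`. -/
def extR0 {k : ℕ} (t : Fin k → ℝ) : ℕ → ℝ := fun i => if h : i < k then t ⟨i, h⟩ else 0

/-- The positive orthant. -/
def posSet (k : ℕ) : Set (Fin k → ℝ) := {t | ∀ j, 0 < t j}

/-- `|a| = a_1 + ⋯ + a_n` (0-based indexing). -/
def sumA (n : ℕ) (a : ℕ → ℂ) : ℂ := ∑ j ∈ Finset.range n, a j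

/-- `ã_j = a_{j+1} + a_1/(n-1)` (0-based indexing). -/
def tildeA (n : ℕ) (a : ℕ → ℂ) : ℕ → ℂ := fun j => a (j + 1) + a 0 / ((n : ℂ) - 1)

/-- The normalized radial part `Ŵ^A_{n,a}` of the class one `GL_n(ℝ)` Whittaker function,
as a function of `(y_1,…,y_{n-1})` (0-based indexing). -/
def WhittAr : ℕ → (ℕ → ℂ) → (ℕ → ℝ) → ℂ
  | 0, _, _ => 1
  | 1, _, _ => 1
  | 2, a, y => 2 * ((y 0 : ℂ) ^ ((a 0 + a 1) / 2)) *
      BesselK ((a 0 - a 1) / 2) (2 * Real.pi * y 0)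
  | (n + 3), a, y =>
      ∫ t in posSet (n + 2),
        WhittAr (n + 2) (tildeA (n + 3) a)
            (fun j => y (j + 1) * Real.sqrt (extR t (j + 1) / extR t j)) *
          (∏ j ∈ Finset.range (n + 2),
            Complex.exp (((-(Real.pi * y j) ^ 2 * extR t j - 1 / extR t j : ℝ) : ℂ)) *
              ((Real.pi * y j : ℝ) : ℂ) ^ ((((n + 2 - j : ℕ) : ℂ) * a 0) / ((n + 2 : ℕ) : ℂ)) *
              ((extR t j : ℝ) : ℂ) ^ ((((n + 3 : ℕ) : ℂ) * a 0) / (2 * ((n + 2 : ℕ) : ℂ)))) *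
          ((Real.pi * extR t (n + 1) : ℝ) : ℂ) ^ (-(sumA (n + 3) a) / 2) *
          (∏ j ∈ Finset.range (n + 2), ((extR t j : ℝ) : ℂ))⁻¹

/-- `Ŵ^A_{n,a}` as a function of the full tuple `(y_1,…,y_n)`. -/
def WhittAhat (n : ℕ) (a : ℕ → ℂ) (y : ℕ → ℝ) : ℂ :=
  ((y (n - 1) : ℝ) : ℂ) ^ sumA n a * WhittAr n a y

/-- The Mellin transform `U_{n,a}` (0-based: `s j` stands for `s_{j+1}`). -/
def Ufun (n : ℕ) (a : ℕ → ℂ) (s : ℕ → ℂ) : ℂ :=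
  ∫ y in posSet (n - 1),
    WhittAr n a (extR y) *
      ∏ j ∈ Finset.range (n - 1), ((extR y j : ℝ) : ℂ) ^ s j / ((extR y j : ℝ) : ℂ)

/-- The normalized radial part `Ŵ^B_{n,b}` of the class one `SO_{2n+1}(ℝ)` Whittaker function. -/
def WhittBr : ℕ → (ℕ → ℂ) → (ℕ → ℝ) → ℂ
  | 0, _, _ => 1
  | 1, b, y => 2 * BesselK (b 0 / 2) (2 * Real.pi * y 0)
  | (n + 2), b, y =>
      ∫ p in (posSet (n + 2) ×ˢ posSet (n + 1)),
        WhittBr (n + 1) b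
            (fun j =>
              if j < n then
                y (j + 1) *
                  Real.sqrt (extR p.1 (j + 1) * extR p.2 (j + 1) /
                    (extR p.1 (j + 2) * extR p.2 j))
              else y (n + 1) * Real.sqrt (extR p.1 (n + 1) / extR p.2 n)) *
          (∏ j ∈ Finset.range (n + 2),
            Complex.exp (((-(Real.pi * y j) ^ 2 * extR p.1 j - 1 / extR p.1 j : ℝ) : ℂ)) *
              ((Real.pi * y j : ℝ) : ℂ) ^ b (n + 1)) *
          (∏ j ∈ Finset.range (n + 1),
            Complex.exp (((-(Real.pi * y j) ^ 2 * (extR p.1 j / extR p.1 (j + 1)) * extR p.2 j -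
                  1 / extR p.2 j : ℝ) : ℂ)) *
              ((extR p.1 (j + 1) * extR p.2 j : ℝ) : ℂ) ^ (b (n + 1) / 2)) *
          ((extR p.1 0 : ℝ) : ℂ) ^ b (n + 1) *
          (∏ j ∈ Finset.range (n + 1), ((extR p.2 j : ℝ) : ℂ))⁻¹ *
          (∏ j ∈ Finset.range (n + 2), ((extR p.1 j : ℝ) : ℂ))⁻¹

/-- The Mellin transform `V_{n,b}` (0-based: `s j` stands for `s_{j+1}`). -/
def Vfun (n : ℕ) (b : ℕ → ℂ) (s : ℕ → ℂ) : ℂ :=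
  ∫ y in posSet n,
    WhittBr n b (extR y) *
      ∏ j ∈ Finset.range n, ((extR y j : ℝ) : ℂ) ^ s j / ((extR y j : ℝ) : ℂ)

/-- Integral over the vertical line `Re z = c`, i.e. `i·∫_ℝ f(c+it) dt`. -/
def VInt (c : ℝ) (f : ℂ → ℂ) : ℂ := Complex.I * ∫ t : ℝ, f (c + t * Complex.I)

/-- Iterated integral over `k` vertical lines with abscissas `c 0, …, c (k-1)`;
the integrand is fed the contour points as a 0-based sequence. -/
def VIntK (k : ℕ) (c : ℕ → ℝ) (f : (ℕ → ℂ) → ℂ) : ℂ :=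
  Complex.I ^ k * ∫ t : Fin k → ℝ, f (fun i => (c i : ℂ) + (extR0 t i : ℝ) * Complex.I)



/-- The archimedean `GL_n × GL_m` zeta integral (`m < n`) in torus coordinates. -/
def zetaGLm (n m : ℕ) (a a' : ℕ → ℂ) (s : ℂ) : ℂ :=
  (2 : ℂ) ^ m * ∫ y in posSet m,
    WhittAhat n a (extR y) * WhittAhat m a' (extR y) *
      ∏ j ∈ Finset.range m,
        ((extR y j : ℝ) : ℂ) ^ (((j + 1 : ℕ) : ℂ) * s) / ((extR y j : ℝ) : ℂ)

/-!
In the logarithmic coordinates `yⱼ = exp xⱼ` the function `U` is the bilateral Laplace transform of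
the Whittaker function, so on the contours a product of two `U`-functions is the Fourier transform
of a function which, after a unimodular change of variables, is integrated over the directions
orthogonal to the contour parameters. Its value at `0` is the zeta integral, and the Barnes integral
recovers it by Fourier inversion; the inversion produces the factor `(2π) ^ (n - 2)`.

Inversion needs the integrability of `U` along the contours. Translating the variables of the
recursion for `Ŵ^A` makes the Laplace transform of one recursion step factor into one-dimensional
integrals of Bessel type, which decay quadratically in the increments of the chain
`0, Im s₁, …, Im s_{n-1}, 0`. Such a product of inverse quadratic factors is integrable
along every coordinate subspace of contour variables.
-/

/-! ### Logarithmic coordinates -/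

theorem ofReal_exp_cpow (x : ℝ) (c : ℂ) : ((Real.exp x : ℝ) : ℂ) ^ c = cexp (c * x) := by
  rw [Complex.cpow_def_of_ne_zero (by exact_mod_cast (Real.exp_pos _).ne'),
    ← Complex.ofReal_log (Real.exp_pos _).le, Real.log_exp, mul_comm]

theorem ofReal_exp_mul_cpow_div (x : ℝ) (c : ℂ) :
    ((Real.exp x : ℝ) : ℂ) * (((Real.exp x : ℝ) : ℂ) ^ c / ((Real.exp x : ℝ) : ℂ)) =
      cexp (c * x) := by
  rw [mul_div_cancel₀ _ (by exact_mod_cast (Real.exp_pos _).ne'), ofReal_exp_cpow]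

theorem integral_Ioi_zero_eq_integral_exp {E : Type*} [NormedAddCommGroup E] [NormedSpace ℝ E]
    (f : ℝ → E) : ∫ t in Set.Ioi (0 : ℝ), f t = ∫ x : ℝ, Real.exp x • f (Real.exp x) := by
  rw [← Real.range_exp, ← Set.image_univ, integral_image_eq_integral_abs_deriv_smul
    MeasurableSet.univ (fun x _ => (Real.hasDerivAt_exp x).hasDerivWithinAt)
    Real.exp_injective.injOn, Measure.restrict_univ]
  simp only [Real.abs_exp]

theorem integral_posSet_eq_integral_exp {E : Type*} [NormedAddCommGroup E] [NormedSpace ℝ E]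
    {k : ℕ} (f : (Fin k → ℝ) → E) :
    ∫ t in posSet k, f t =
      ∫ x : Fin k → ℝ, (∏ j, Real.exp (x j)) • f (fun j => Real.exp (x j)) := by
  have himg : (fun (x : Fin k → ℝ) j => Real.exp (x j)) '' Set.univ = posSet k := by
    ext t
    simp only [Set.image_univ, Set.mem_range, posSet, Set.mem_ofPred_eq]
    exact ⟨by rintro ⟨x, rfl⟩ _; exact Real.exp_pos _,
      fun h => ⟨fun j => Real.log (t j), funext fun j => Real.exp_log (h j)⟩⟩
  let D (x : Fin k → ℝ) : (Fin k → ℝ) →L[ℝ] (Fin k → ℝ) := ContinuousLinearMap.pi fun j =>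
    (Real.exp (x j) • ContinuousLinearMap.id ℝ ℝ).comp (ContinuousLinearMap.proj j)
  have hder (x : Fin k → ℝ) (_ : x ∈ Set.univ) :
      HasFDerivWithinAt (fun (x : Fin k → ℝ) j => Real.exp (x j)) (D x) Set.univ x := by
    refine (hasFDerivAt_pi.2 fun j => ?_).hasFDerivWithinAt
    refine ((Real.hasDerivAt_exp (x j)).hasFDerivAt.comp x
      (hasFDerivAt_apply (𝕜 := ℝ) j x)).congr_fderiv ?_
    ext v
    simp [mul_comm]
  have hdet (x : Fin k → ℝ) : (D x).det = ∏ j, Real.exp (x j) := by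
    rw [ContinuousLinearMap.det_pi]
    simp [ContinuousLinearMap.det]
  have hinj : Set.InjOn (fun (x : Fin k → ℝ) j => Real.exp (x j)) Set.univ :=
    fun _ _ _ _ h => funext fun j => Real.exp_injective (congrFun h j)
  rw [← himg, integral_image_eq_integral_abs_det_fderiv_smul volume MeasurableSet.univ hder hinj,
    Measure.restrict_univ]
  simp only [hdet, abs_of_nonneg (Finset.prod_nonneg fun _ _ => (Real.exp_pos _).le)]

theorem exists_exp_neg_mul_exp_le {c : ℝ} (hc : 0 < c) {ρ : ℝ} (hρ : 0 < ρ) :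
    ∃ C : ℝ, ∀ w, Real.exp (-(c * Real.exp w)) ≤ C * Real.exp (-(ρ * w)) := by
  refine ⟨Real.exp (ρ * (Real.log (ρ / c) - 1)), fun w => ?_⟩
  rw [← Real.exp_add, Real.exp_le_exp]
  have h := mul_le_mul_of_nonneg_left (Real.add_one_le_exp (w - Real.log (ρ / c))) hρ.le
  rw [Real.exp_sub, Real.exp_log (div_pos hρ hc),
    show ρ * (Real.exp w / (ρ / c)) = c * Real.exp w by field_simp] at h
  linarith

theorem integrable_exp_neg_mul_abs {η : ℝ} (hη : 0 < η) :
    Integrable fun τ : ℝ => Real.exp (-(η * |τ|)) := by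
  rw [← integrableOn_univ, ← Set.Iic_union_Ioi (a := (0 : ℝ))]
  refine IntegrableOn.union ?_ ?_
  · refine (integrableOn_exp_mul_Iic hη 0).congr_fun (fun τ hτ => ?_) measurableSet_Iic
    simp [abs_of_nonpos (Set.mem_Iic.1 hτ)]
  · refine (integrableOn_exp_mul_Ioi (neg_neg_of_pos hη) 0).congr_fun (fun τ hτ => ?_)
      measurableSet_Ioi
    simp [abs_of_pos (Set.mem_Ioi.1 hτ)]

theorem integrable_prod_exp_neg_mul_abs {ι : Type*} [Fintype ι] {ε : ι → ℝ} (hε : ∀ j, 0 < ε j) :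
    Integrable fun x : ι → ℝ => ∏ j, Real.exp (-(ε j * |x j|)) :=
  Integrable.fintype_prod fun j => integrable_exp_neg_mul_abs (hε j)

theorem integrable_exp_neg_mul_sub_exp {c η : ℝ} (hc : 0 < c) (hη : 0 < η) :
    Integrable fun τ : ℝ => Real.exp (-(η * τ) - c * Real.exp (-τ)) := by
  obtain ⟨C, h⟩ := exists_exp_neg_mul_exp_le hc (mul_pos two_pos hη)
  refine ((integrable_exp_neg_mul_abs hη).const_mul (max C 1)).mono'
    (by fun_prop) (Filter.Eventually.of_forall fun τ => ?_)
  rw [Real.norm_of_nonneg (Real.exp_pos _).le]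
  rcases le_total 0 τ with h0 | h0
  · rw [abs_of_nonneg h0]
    refine le_trans ?_ (mul_le_mul_of_nonneg_right (le_max_right C 1) (Real.exp_pos _).le)
    rw [one_mul, Real.exp_le_exp]
    linarith [mul_pos hc (Real.exp_pos (-τ))]
  · rw [abs_of_nonpos h0]
    refine le_trans ?_ (mul_le_mul_of_nonneg_right (le_max_left C 1) (Real.exp_pos _).le)
    calc Real.exp (-(η * τ) - c * Real.exp (-τ))
        = Real.exp (-(η * τ)) * Real.exp (-(c * Real.exp (-τ))) := by
          rw [sub_eq_add_neg, Real.exp_add]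
      _ ≤ Real.exp (-(η * τ)) * (C * Real.exp (-(2 * η * -τ))) := by gcongr; exact h (-τ)
      _ = C * Real.exp (-(η * -τ)) := by
          rw [mul_left_comm, ← Real.exp_add]
          ring_nf

/-! ### Integrals of Bessel type -/

/-- The integrand of `besselInt`, a two-sided exponential cutoff of `e^{βτ}`. -/
def besselKer (Y : ℝ) (β : ℂ) (τ : ℝ) : ℂ :=
  cexp (((-(Y * Real.exp τ) - Real.exp (-τ) : ℝ) : ℂ) + β * τ)

/-- The integral `∫ exp(-Y e^τ - e^{-τ} + β τ) dτ`. For `Y > 0` it equals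
`2 Y^{-β/2} K_β(2 √Y)`, and for `Y = 0` it equals `Γ(-β)`. -/
def besselInt (Y : ℝ) (β : ℂ) : ℂ := ∫ τ, besselKer Y β τ

theorem continuous_besselKer (Y : ℝ) (β : ℂ) : Continuous (besselKer Y β) := by
  unfold besselKer
  fun_prop

theorem norm_besselKer (Y : ℝ) (β : ℂ) (τ : ℝ) :
    ‖besselKer Y β τ‖ = Real.exp (-(Y * Real.exp τ) - Real.exp (-τ) + β.re * τ) := by
  rw [besselKer, Complex.norm_exp]
  simp only [add_re, ofReal_re, re_mul_ofReal]

theorem BesselK_two_mul_eq (ν : ℂ) {y : ℝ} (hy : 0 < y) :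
    BesselK ν (2 * y) = (1 / 2) * ((y : ℂ) ^ ν * besselInt (y ^ 2) ν) := by
  rw [BesselK, integral_Ioi_zero_eq_integral_exp, ← integral_add_right_eq_self _ (Real.log y),
    besselInt, ← integral_const_mul ((y : ℂ) ^ ν)]
  refine congrArg (1 / 2 * · : ℂ → ℂ) (integral_congr_ae (Filter.Eventually.of_forall fun τ => ?_))
  have hyτ : Real.exp (τ + Real.log y) = Real.exp τ * y := by
    rw [Real.exp_add, Real.exp_log hy]
  have hpow : (y : ℂ) ^ ν = cexp (ν * Real.log y) := by
    rw [← ofReal_exp_cpow, Real.exp_log hy]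
  simp only
  rw [real_smul, mul_div_assoc, mul_left_comm, ofReal_exp_mul_cpow_div, hyτ, hpow, besselKer,
    ← Complex.exp_add, ← Complex.exp_add, Real.exp_neg]
  congr 1
  have hy' : (y : ℂ) ≠ 0 := by exact_mod_cast hy.ne'
  have hτ : cexp τ ≠ 0 := Complex.exp_ne_zero _
  push_cast
  field_simp
  ring

theorem hasDerivAt_besselKer (Y : ℝ) (β : ℂ) (τ : ℝ) :
    HasDerivAt (besselKer Y β)
      ((((Real.exp (-τ) - Y * Real.exp τ : ℝ) : ℂ) + β) * besselKer Y β τ) τ := by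
  have hexp : HasDerivAt (fun t : ℝ => -(Y * Real.exp t) - Real.exp (-t))
      (Real.exp (-τ) - Y * Real.exp τ) τ :=
    (((Real.hasDerivAt_exp τ).const_mul Y).neg.sub (hasDerivAt_neg τ).exp).congr_deriv (by ring)
  have hlin : HasDerivAt (fun t : ℝ => β * (t : ℂ)) β τ := by
    simpa using ((hasDerivAt_id (τ : ℂ)).const_mul β).comp_ofReal
  exact (hexp.ofReal_comp.add hlin).cexp.congr_deriv (mul_comm _ _)

theorem one_add_add_sq_mul_exp_neg_le {s : ℝ} (hs : 0 ≤ s) :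
    (1 + s + s ^ 2) * Real.exp (-s) ≤ 8 * Real.exp (-(s / 2)) := by
  have h := Real.quadratic_le_exp_of_nonneg (by positivity : 0 ≤ s / 2)
  calc (1 + s + s ^ 2) * Real.exp (-s) ≤ 8 * Real.exp (s / 2) * Real.exp (-s) := by
        gcongr; nlinarith
    _ = 8 * Real.exp (-(s / 2)) := by rw [mul_assoc, ← Real.exp_add]; ring_nf

theorem integral_deriv_add_mul_besselKer {Y : ℝ} {β : ℂ} {f f' : ℝ → ℝ}
    (hf : ∀ τ, HasDerivAt f (f' τ) τ) (hint : Integrable fun τ => (f τ : ℂ) * besselKer Y β τ)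
    (hint' : Integrable fun τ =>
      ((f' τ + f τ * (Real.exp (-τ) - Y * Real.exp τ) : ℝ) : ℂ) * besselKer Y β τ) :
    ∫ τ, ((f' τ + f τ * (Real.exp (-τ) - Y * Real.exp τ) : ℝ) : ℂ) * besselKer Y β τ =
      -β * ∫ τ, (f τ : ℂ) * besselKer Y β τ := by
  have hderiv (τ : ℝ) : HasDerivAt (fun t => (f t : ℂ) * besselKer Y β t)
      (((f' τ + f τ * (Real.exp (-τ) - Y * Real.exp τ) : ℝ) : ℂ) * besselKer Y β τ +
        β * ((f τ : ℂ) * besselKer Y β τ)) τ := by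
    refine ((hf τ).ofReal_comp.mul (hasDerivAt_besselKer Y β τ)).congr_deriv ?_
    push_cast
    ring
  have h := integral_eq_zero_of_hasDerivAt_of_integrable hderiv
    (hint'.add (hint.const_mul β)) hint
  rw [integral_add hint' (hint.const_mul β), integral_const_mul] at h
  linear_combination h

theorem abs_one_le_one_add_add_sq {u v : ℝ} (hu : 0 ≤ u) (hv : 0 ≤ v) :
    |(1 : ℝ)| ≤ 1 + (u + v) + (u + v) ^ 2 := by
  rw [abs_one]
  nlinarith

theorem abs_sub_le_one_add_add_sq {u v : ℝ} (hu : 0 ≤ u) (hv : 0 ≤ v) :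
    |v - u| ≤ 1 + (u + v) + (u + v) ^ 2 := by
  rw [abs_le]
  constructor <;> nlinarith

theorem abs_sub_sq_sub_add_le_one_add_add_sq {u v : ℝ} (hu : 0 ≤ u) (hv : 0 ≤ v) :
    |(v - u) ^ 2 - (u + v)| ≤ 1 + (u + v) + (u + v) ^ 2 := by
  rw [abs_le]
  constructor <;> nlinarith [mul_nonneg hu hv]

section BesselBounds

variable {Y M ρ : ℝ} (hY : 0 ≤ Y)
  (hM : ∀ τ, Real.exp (-(Y * Real.exp τ / 2)) ≤ M * Real.exp (-(ρ * τ)))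

include hY hM

theorem norm_mul_besselKer_le (β : ℂ) {f τ : ℝ}
    (hf : |f| ≤ 1 + (Y * Real.exp τ + Real.exp (-τ)) + (Y * Real.exp τ + Real.exp (-τ)) ^ 2) :
    ‖(f : ℂ) * besselKer Y β τ‖ ≤
      8 * M * Real.exp (-((ρ - β.re) * τ) - 1 / 2 * Real.exp (-τ)) := by
  set s := Y * Real.exp τ + Real.exp (-τ) with hs
  have hs0 : 0 ≤ s := by positivity
  have hsplit : Real.exp (-(s / 2)) =
      Real.exp (-(Y * Real.exp τ / 2)) * Real.exp (-(1 / 2 * Real.exp (-τ))) := by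
    rw [← Real.exp_add, hs]; ring_nf
  rw [norm_mul, norm_besselKer, Complex.norm_real, Real.norm_eq_abs]
  calc |f| * Real.exp (-(Y * Real.exp τ) - Real.exp (-τ) + β.re * τ)
      = |f| * Real.exp (-s) * Real.exp (β.re * τ) := by
        rw [mul_assoc, ← Real.exp_add, hs]; ring_nf
    _ ≤ 8 * Real.exp (-(s / 2)) * Real.exp (β.re * τ) := by
        refine mul_le_mul_of_nonneg_right ?_ (Real.exp_pos _).le
        exact (mul_le_mul_of_nonneg_right hf (Real.exp_pos _).le).trans
          (one_add_add_sq_mul_exp_neg_le hs0)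
    _ ≤ 8 * (M * Real.exp (-(ρ * τ)) * Real.exp (-(1 / 2 * Real.exp (-τ)))) *
          Real.exp (β.re * τ) := by
        rw [hsplit]; gcongr; exact hM τ
    _ = 8 * M * (Real.exp (-(ρ * τ)) * Real.exp (-(1 / 2 * Real.exp (-τ))) *
          Real.exp (β.re * τ)) := by ring
    _ = 8 * M * Real.exp (-((ρ - β.re) * τ) - 1 / 2 * Real.exp (-τ)) := by
        rw [← Real.exp_add, ← Real.exp_add]; ring_nf

theorem integrable_mul_besselKer {β : ℂ} (hβ : β.re < ρ) {f : ℝ → ℝ} (hfc : Continuous f)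
    (hf : ∀ τ, |f τ| ≤
      1 + (Y * Real.exp τ + Real.exp (-τ)) + (Y * Real.exp τ + Real.exp (-τ)) ^ 2) :
    Integrable fun τ => (f τ : ℂ) * besselKer Y β τ := by
  have hK := continuous_besselKer Y β
  exact ((integrable_exp_neg_mul_sub_exp one_half_pos (sub_pos.2 hβ)).const_mul (8 * M)).mono'
    (by fun_prop) (Filter.Eventually.of_forall fun τ => norm_mul_besselKer_le hY hM β (hf τ))

theorem norm_integral_mul_besselKer_le {β : ℂ} (hβ : β.re < ρ) {f : ℝ → ℝ}
    (hf : ∀ τ, |f τ| ≤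
      1 + (Y * Real.exp τ + Real.exp (-τ)) + (Y * Real.exp τ + Real.exp (-τ)) ^ 2) :
    ‖∫ τ, (f τ : ℂ) * besselKer Y β τ‖ ≤
      8 * M * ∫ τ : ℝ, Real.exp (-((ρ - β.re) * τ) - 1 / 2 * Real.exp (-τ)) := by
  rw [← integral_const_mul]
  exact norm_integral_le_of_norm_le
    ((integrable_exp_neg_mul_sub_exp one_half_pos (sub_pos.2 hβ)).const_mul (8 * M))
    (Filter.Eventually.of_forall fun τ => norm_mul_besselKer_le hY hM β (hf τ))

theorem sq_mul_besselInt {β : ℂ} (hβ : β.re < ρ) :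
    β ^ 2 * besselInt Y β =
      ∫ τ, (((Real.exp (-τ) - Y * Real.exp τ) ^ 2 - (Y * Real.exp τ + Real.exp (-τ)) : ℝ) : ℂ) *
        besselKer Y β τ := by
  have hYτ (τ : ℝ) : 0 ≤ Y * Real.exp τ := by positivity
  have h0 := integrable_mul_besselKer hY hM hβ (f := fun _ => 1) continuous_const
    fun τ => abs_one_le_one_add_add_sq (hYτ τ) (Real.exp_pos _).le
  have h1 := integrable_mul_besselKer hY hM hβ
    (f := fun τ => Real.exp (-τ) - Y * Real.exp τ) (by fun_prop)
    fun τ => abs_sub_le_one_add_add_sq (hYτ τ) (Real.exp_pos _).le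
  have h2 := integrable_mul_besselKer hY hM hβ
    (f := fun τ => (Real.exp (-τ) - Y * Real.exp τ) ^ 2 - (Y * Real.exp τ + Real.exp (-τ)))
    (by fun_prop) fun τ => abs_sub_sq_sub_add_le_one_add_add_sq (hYτ τ) (Real.exp_pos _).le
  have hderiv (τ : ℝ) : HasDerivAt (fun t => Real.exp (-t) - Y * Real.exp t)
      (-(Y * Real.exp τ + Real.exp (-τ))) τ :=
    ((hasDerivAt_neg τ).exp.sub ((Real.hasDerivAt_exp τ).const_mul Y)).congr_deriv (by ring)
  have hparts_one :=
    integral_deriv_add_mul_besselKer (β := β) (fun τ => hasDerivAt_const τ (1 : ℝ)) h0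
    (by simpa using h1)
  have hparts_sub := integral_deriv_add_mul_besselKer (β := β) hderiv h1
    (h2.congr (Filter.Eventually.of_forall fun τ => by push_cast; ring))
  calc β ^ 2 * besselInt Y β
      = -β * ∫ τ, ((Real.exp (-τ) - Y * Real.exp τ : ℝ) : ℂ) * besselKer Y β τ := by
        simp only [zero_add, one_mul, ofReal_one] at hparts_one
        rw [hparts_one, besselInt]
        ring
    _ = _ := by
        rw [← hparts_sub]
        refine integral_congr_ae (Filter.Eventually.of_forall fun τ => ?_)
        push_cast
        ring

theorem norm_besselInt_le {β : ℂ} (hβ : β.re < ρ) :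
    ‖besselInt Y β‖ ≤
      16 * M * (∫ τ : ℝ, Real.exp (-((ρ - β.re) * τ) - 1 / 2 * Real.exp (-τ))) *
        (1 + β.im ^ 2)⁻¹ := by
  set D := ∫ τ : ℝ, Real.exp (-((ρ - β.re) * τ) - 1 / 2 * Real.exp (-τ))
  have h0 : ‖besselInt Y β‖ ≤ 8 * M * D := by
    simpa only [besselInt, ofReal_one, one_mul] using
      norm_integral_mul_besselKer_le hY hM hβ (f := fun _ => 1)
        fun τ => abs_one_le_one_add_add_sq (mul_nonneg hY (Real.exp_pos τ).le) (Real.exp_pos _).le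
  have h2 : ‖β‖ ^ 2 * ‖besselInt Y β‖ ≤ 8 * M * D := by
    rw [← norm_pow, ← norm_mul, sq_mul_besselInt hY hM hβ]
    exact norm_integral_mul_besselKer_le hY hM hβ fun τ =>
      abs_sub_sq_sub_add_le_one_add_add_sq (mul_nonneg hY (Real.exp_pos τ).le) (Real.exp_pos _).le
  have him : β.im ^ 2 ≤ ‖β‖ ^ 2 := by
    rw [← sq_abs]
    gcongr
    exact Complex.abs_im_le_norm β
  rw [← div_eq_mul_inv, le_div_iff₀ (by positivity)]
  nlinarith [mul_le_mul_of_nonneg_right him (norm_nonneg (besselInt Y β))]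

end BesselBounds

theorem exists_norm_besselInt_exp_le {b ρ : ℝ} (hρ : 0 < ρ) (hb : b < ρ) :
    ∃ C : ℝ, ∀ (l : ℝ) (β : ℂ), β.re = b →
      ‖besselInt (Real.pi ^ 2 * Real.exp (2 * l)) β‖ ≤
        C * Real.exp (-(2 * ρ * l)) * (1 + β.im ^ 2)⁻¹ := by
  obtain ⟨D, hD⟩ := exists_exp_neg_mul_exp_le (half_pos (pow_pos Real.pi_pos 2)) hρ
  refine ⟨16 * D * ∫ τ : ℝ, Real.exp (-((ρ - b) * τ) - 1 / 2 * Real.exp (-τ)),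
    fun l β hβ => (norm_besselInt_le (M := D * Real.exp (-(2 * ρ * l))) (ρ := ρ)
    (by positivity) (fun τ => ?_) (hβ.trans_lt hb)).trans_eq ?_⟩
  · convert hD (2 * l + τ) using 1
    · rw [Real.exp_add]; ring_nf
    · rw [mul_assoc, ← Real.exp_add]; ring_nf
  · rw [hβ]; ring

theorem exists_norm_besselInt_zero_le {b : ℝ} (hb : b < 0) :
    ∃ C : ℝ, ∀ β : ℂ, β.re = b → ‖besselInt 0 β‖ ≤ C * (1 + β.im ^ 2)⁻¹ :=
  ⟨_, fun β hβ => hβ ▸ norm_besselInt_le (M := 1) (ρ := 0) le_rfl (by simp) (hβ.trans_lt hb)⟩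

/-! ### Laplace transforms of exponentially dominated functions -/

section LaplaceTransform

variable {ι : Type*} [Fintype ι]

theorem le_exp_neg_mul_prod_exp_neg_abs_mul_sum [DecidableEq ι] {r : ℝ} {x σ : ι → ℝ}
    {G : (ι → Bool) → ℝ} (hG : ∀ b, 0 ≤ G b)
    (hr : ∀ b, r ≤ Real.exp (-∑ j, (bif b j then σ j / 2 else 3 * σ j / 2) * x j) * G b) :
    r ≤ Real.exp (-∑ j, σ j * x j) * (∏ j, Real.exp (-(σ j / 2 * |x j|))) * ∑ b, G b := by
  let b : ι → Bool := fun j => decide (x j ≤ 0)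
  refine (hr b).trans (mul_le_mul (le_of_eq ?_)
    (Finset.single_le_sum (fun b _ => hG b) (Finset.mem_univ b)) (hG b) (by positivity))
  rw [← Real.exp_sum, ← Real.exp_add, ← Finset.sum_neg_distrib, ← Finset.sum_neg_distrib,
    ← Finset.sum_add_distrib]
  refine congrArg Real.exp (Finset.sum_congr rfl fun j _ => ?_)
  by_cases h : x j ≤ 0
  · simp only [b, h, decide_true, cond_true, abs_of_nonpos]
    ring
  · simp only [b, h, decide_false, cond_false, abs_of_pos (not_le.1 h)]
    ring

theorem norm_cexp_sum_mul_ofReal (S : ι → ℂ) (x : ι → ℝ) :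
    ‖cexp (∑ j, S j * x j)‖ = Real.exp (∑ j, (S j).re * x j) := by
  simp only [Complex.norm_exp, re_sum, re_mul_ofReal]

theorem exists_norm_mul_cexp_le_of_forall_norm_le {T : Type*} [MeasurableSpace T] {μ : Measure T}
    {F : (ι → ℝ) → T → ℂ}
    (hF : ∀ ε : ι → ℝ, (∀ j, 0 < ε j) →
      ∃ G : T → ℝ, Integrable G μ ∧ ∀ x t, ‖F x t‖ ≤ Real.exp (-∑ j, ε j * x j) * G t)
    {S : ι → ℂ} (hS : ∀ j, 0 < (S j).re) :
    ∃ G : T → ℝ, Integrable G μ ∧ ∀ x t, ‖F x t * cexp (∑ j, S j * x j)‖ ≤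
      (∏ j, Real.exp (-((S j).re / 2 * |x j|))) * G t := by
  classical
  have hε (b : ι → Bool) (j : ι) :
      0 < (fun j => bif b j then (S j).re / 2 else 3 * (S j).re / 2) j := by
    have := hS j
    cases hb : b j <;> simp only [hb, cond_true, cond_false] <;> positivity
  choose G hG hFG using fun b => hF _ (hε b)
  have hG0 (b : ι → Bool) (t : T) : 0 ≤ G b t :=
    nonneg_of_mul_nonneg_right ((norm_nonneg _).trans (hFG b 0 t)) (Real.exp_pos _)
  refine ⟨fun t => ∑ b, G b t, integrable_finsetSum _ fun b _ => hG b, fun x t => ?_⟩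
  rw [norm_mul, norm_cexp_sum_mul_ofReal]
  have hle := le_exp_neg_mul_prod_exp_neg_abs_mul_sum (σ := fun j => (S j).re)
    (fun b => hG0 b t) fun b => hFG b x t
  refine (mul_le_mul_of_nonneg_right hle (Real.exp_pos _).le).trans_eq ?_
  rw [Real.exp_neg, mul_assoc, mul_assoc, inv_mul_eq_iff_eq_mul₀ (Real.exp_ne_zero _), mul_comm]
  ring

theorem integrable_prod_mul_cexp_of_forall_norm_le {T : Type*} [MeasurableSpace T] {μ : Measure T}
    [SFinite μ] {F : (ι → ℝ) → T → ℂ}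
    (hFm : AEStronglyMeasurable (fun p : (ι → ℝ) × T => F p.1 p.2) (volume.prod μ))
    (hF : ∀ ε : ι → ℝ, (∀ j, 0 < ε j) →
      ∃ G : T → ℝ, Integrable G μ ∧ ∀ x t, ‖F x t‖ ≤ Real.exp (-∑ j, ε j * x j) * G t)
    {S : ι → ℂ} (hS : ∀ j, 0 < (S j).re) :
    Integrable (fun p : (ι → ℝ) × T => F p.1 p.2 * cexp (∑ j, S j * p.1 j)) (volume.prod μ) := by
  obtain ⟨G, hG, hle⟩ := exists_norm_mul_cexp_le_of_forall_norm_le hF hS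
  exact ((integrable_prod_exp_neg_mul_abs fun j => half_pos (hS j)).mul_prod hG).mono'
    (hFm.mul (by fun_prop)) (Filter.Eventually.of_forall fun p => hle p.1 p.2)

/-- Continuity and domination by `exp (-∑ εⱼ xⱼ)` for all `ε > 0`. In the coordinates `y = e^x`
this is the growth of a Whittaker function with imaginary parameters, and it makes the Laplace
transform converge absolutely on `Re S > 0`. -/
structure IsExpDominated (Ψ : (ι → ℝ) → ℂ) : Prop where
  continuous : Continuous Ψ
  exists_norm_le (ε : ι → ℝ) (hε : ∀ j, 0 < ε j) :
    ∃ C : ℝ, ∀ x, ‖Ψ x‖ ≤ C * Real.exp (-∑ j, ε j * x j)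

/-- The bilateral Laplace transform, with the sign of the exponent for which it is the Mellin
transform in the coordinates `y = e^x`. -/
def laplace (Ψ : (ι → ℝ) → ℂ) (S : ι → ℂ) : ℂ := ∫ x : ι → ℝ, Ψ x * cexp (∑ j, S j * x j)

theorem norm_laplace_add_mul_I_le (Ψ : (ι → ℝ) → ℂ) (S : ι → ℂ) (y : ι → ℝ) :
    ‖laplace Ψ fun j => S j + y j * I‖ ≤ ∫ x : ι → ℝ, ‖Ψ x * cexp (∑ j, S j * x j)‖ := by
  refine (norm_integral_le_integral_norm _).trans_eq ?_
  simp [norm_cexp_sum_mul_ofReal]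

namespace IsExpDominated

variable {Ψ : (ι → ℝ) → ℂ} (hΨ : IsExpDominated Ψ)

include hΨ

theorem exists_norm_mul_cexp_le {S : ι → ℂ} (hS : ∀ j, 0 < (S j).re) :
    ∃ C : ℝ, ∀ (s : Finset ι) (x : ι → ℝ), ‖Ψ x * cexp (∑ j, S j * x j)‖ ≤
      (∏ j ∈ s, Real.exp (-((S j).re / 2 * |x j|))) * C := by
  classical
  obtain ⟨G, -, hG⟩ := exists_norm_mul_cexp_le_of_forall_norm_le (μ := Measure.dirac ())
    (F := fun x _ => Ψ x) (fun ε hε => (hΨ.exists_norm_le ε hε).imp' (fun C _ => C)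
      fun C hC => ⟨integrable_const C, fun x _ => (hC x).trans_eq (mul_comm _ _)⟩) hS
  have hG0 : 0 ≤ G () := nonneg_of_mul_nonneg_right ((norm_nonneg _).trans (hG 0 ()))
    (Finset.prod_pos fun j _ => Real.exp_pos _)
  refine ⟨G (), fun s x => (hG x ()).trans (mul_le_mul_of_nonneg_right ?_ hG0)⟩
  rw [← Finset.prod_mul_prod_compl s]
  refine mul_le_of_le_one_right (by positivity) (Finset.prod_le_one (fun j _ => by positivity)
    fun j _ => Real.exp_le_one_iff.2 (neg_nonpos.2 ?_))
  have := hS j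
  positivity

theorem integrable_mul_cexp {S : ι → ℂ} (hS : ∀ j, 0 < (S j).re) :
    Integrable fun x : ι → ℝ => Ψ x * cexp (∑ j, S j * x j) := by
  obtain ⟨C, hC⟩ := hΨ.exists_norm_mul_cexp_le hS
  have hc := hΨ.continuous
  exact ((integrable_prod_exp_neg_mul_abs fun j => half_pos (hS j)).mul_const C).mono'
    (by fun_prop) (Filter.Eventually.of_forall (hC Finset.univ))

theorem continuous_laplace {S : ι → ℂ} (hS : ∀ j, 0 < (S j).re) :
    Continuous fun y : ι → ℝ => laplace Ψ fun j => S j + y j * I := by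
  have hc := hΨ.continuous
  refine continuous_of_dominated (fun y => by fun_prop) (fun y => Filter.Eventually.of_forall
    fun x => ?_) (hΨ.integrable_mul_cexp hS).norm (Filter.Eventually.of_forall fun x => by fun_prop)
  simp [norm_cexp_sum_mul_ofReal]

end IsExpDominated

end LaplaceTransform

/-! ### Whittaker functions in logarithmic coordinates -/

theorem WhittAr_congr : ∀ (n : ℕ) (a : ℕ → ℂ) {y y' : ℕ → ℝ},
    (∀ j, j + 1 < n → y j = y' j) → WhittAr n a y = WhittAr n a y'
  | 0, _, _, _, _ => by simp only [WhittAr]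
  | 1, _, _, _, _ => by simp only [WhittAr]
  | 2, _, _, _, h => by simp only [WhittAr, h 0 (by norm_num)]
  | n + 3, a, y, y', h => by
    simp only [WhittAr]
    congr 1
    funext t
    congr 2
    congr 1
    · refine WhittAr_congr (n + 2) _ fun j hj => ?_
      rw [h (j + 1) (by omega)]
    · refine Finset.prod_congr rfl fun j hj => ?_
      rw [h j (by have := Finset.mem_range.1 hj; omega)]

theorem extR_coe {k : ℕ} (t : Fin k → ℝ) (j : Fin k) : extR t j = t j := by
  simp [extR]

/-- The function `Ŵ^A_{k+1,a}` in the logarithmic coordinates `yⱼ = exp xⱼ`. -/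
def logWhitt (k : ℕ) (a : ℕ → ℂ) (x : Fin k → ℝ) : ℂ :=
  WhittAr (k + 1) a (extR fun j => Real.exp (x j))

theorem WhittAr_eq_logWhitt (k : ℕ) (a : ℕ → ℂ) (y : ℕ → ℝ) (x : Fin k → ℝ)
    (h : ∀ j : Fin k, y j = Real.exp (x j)) : WhittAr (k + 1) a y = logWhitt k a x := by
  refine WhittAr_congr _ _ fun j hj => ?_
  have hj' : j < k := by omega
  simpa [extR, hj'] using h ⟨j, hj'⟩

theorem Ufun_eq_laplace (k : ℕ) (a S : ℕ → ℂ) :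
    Ufun (k + 1) a S = laplace (logWhitt k a) fun j => S j := by
  change ∫ y in posSet k, WhittAr (k + 1) a (extR y) *
    ∏ j ∈ Finset.range k, ((extR y j : ℝ) : ℂ) ^ S j / ((extR y j : ℝ) : ℂ) = _
  rw [integral_posSet_eq_integral_exp, laplace]
  refine integral_congr_ae (Filter.Eventually.of_forall fun x => ?_)
  simp only [Finset.prod_range, extR_coe, real_smul, ofReal_prod]
  rw [mul_left_comm, ← Finset.prod_mul_distrib, Complex.exp_sum, logWhitt]
  simp only [ofReal_exp_mul_cpow_div]

theorem zetaGLm_eq_integral_logWhitt {K p : ℕ} (hpK : p < K) (a a' : ℕ → ℂ) (s : ℂ) :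
    zetaGLm (K + 1) (p + 1) a a' s = (2 : ℂ) ^ (p + 1) * ∫ x : Fin (p + 1) → ℝ,
      logWhitt K a (fun j => extR0 x j) * logWhitt p a' (fun j => x j.castSucc) *
        cexp (sumA (p + 1) a' * x (Fin.last p) +
          ∑ j : Fin (p + 1), ((j + 1 : ℕ) : ℂ) * s * x j) := by
  rw [zetaGLm, integral_posSet_eq_integral_exp]
  refine congrArg (_ * ·) (integral_congr_ae (Filter.Eventually.of_forall fun x => ?_))
  have hK : ((extR (fun j => Real.exp (x j)) K : ℝ) : ℂ) ^ sumA (K + 1) a = 1 := by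
    simp [extR, hpK.not_ge]
  have hp : extR (fun j => Real.exp (x j)) p = Real.exp (x (Fin.last p)) :=
    extR_coe (fun j => Real.exp (x j)) (Fin.last p)
  have ha : WhittAr (K + 1) a (extR fun j => Real.exp (x j)) =
      logWhitt K a (fun j => extR0 x j) := WhittAr_eq_logWhitt K a _ _ fun j => by
    by_cases hj : (j : ℕ) < p + 1 <;> simp [extR, extR0, hj]
  have ha' : WhittAr (p + 1) a' (extR fun j => Real.exp (x j)) =
      logWhitt p a' (fun j => x j.castSucc) :=
    WhittAr_eq_logWhitt p a' _ _ fun j => extR_coe (fun j => Real.exp (x j)) j.castSucc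
  simp only [Finset.prod_range, extR_coe, WhittAhat, Nat.add_sub_cancel, real_smul, ofReal_prod]
  rw [hK, hp, ha, ha', ofReal_exp_cpow, Complex.exp_add, Complex.exp_sum, mul_left_comm,
    ← Finset.prod_mul_distrib]
  simp only [ofReal_exp_mul_cpow_div]
  ring

/-- The integrand of the recursion for Whittaker functions in logarithmic coordinates. -/
def whitKer (k : ℕ) (Ψ : (Fin k → ℝ) → ℂ) (B : Fin (k + 1) → ℂ) (x τ : Fin (k + 1) → ℝ) : ℂ :=
  Ψ (fun j => x j.succ + (τ j.succ - τ j.castSucc) / 2) *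
    ∏ j, besselKer (Real.pi ^ 2 * Real.exp (2 * x j)) (B j) (τ j)

/-- One step of the recursion for Whittaker functions in logarithmic coordinates, with all
constants and exponents left free. -/
def whitStep (k : ℕ) (Ψ : (Fin k → ℝ) → ℂ) (κ : ℂ) (A B : Fin (k + 1) → ℂ)
    (x : Fin (k + 1) → ℝ) : ℂ :=
  κ * cexp (∑ j, A j * x j) * ∫ τ, whitKer k Ψ B x τ

theorem logWhitt_zero (a : ℕ → ℂ) : logWhitt 0 a = fun _ => 1 := by
  funext _
  simp only [logWhitt, WhittAr]

theorem logWhitt_one (a : ℕ → ℂ) :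
    logWhitt 1 a = whitStep 0 (fun _ => 1) ((Real.pi : ℂ) ^ ((a 0 - a 1) / 2))
      (fun _ => a 0) (fun _ => (a 0 - a 1) / 2) := by
  funext x
  set ν := (a 0 - a 1) / 2 with hν
  have hx : extR (fun j => Real.exp (x j)) 0 = Real.exp (x 0) :=
    extR_coe (fun j => Real.exp (x j)) (0 : Fin 1)
  have hK : ∫ τ, whitKer 0 (fun _ => 1) (fun _ => ν) x τ =
      besselInt ((Real.pi * Real.exp (x 0)) ^ 2) ν := by
    simp only [whitKer, one_mul]
    rw [integral_fintype_prod_volume_eq_prod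
      (fun (j : Fin 1) τ => besselKer (Real.pi ^ 2 * Real.exp (2 * x j)) ν τ),
      Fin.prod_univ_one, besselInt, mul_pow, ← Real.exp_nat_mul, Nat.cast_ofNat]
  have hexp : cexp (a 0 * x 0) = cexp ((a 0 + a 1) / 2 * x 0) * cexp (ν * x 0) := by
    rw [← Complex.exp_add, hν]
    ring_nf
  have hA : ∑ j : Fin (0 + 1), a 0 * (x j : ℂ) = a 0 * x 0 := Fin.sum_univ_one _
  simp only [logWhitt, WhittAr, whitStep, hx]
  rw [hA, hK, mul_assoc 2 Real.pi, BesselK_two_mul_eq ν (by positivity), ofReal_mul,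
    Complex.mul_cpow_ofReal_nonneg Real.pi_pos.le (Real.exp_pos _).le, ofReal_exp_cpow,
    ofReal_exp_cpow, hexp]
  ring

theorem besselKer_add (Y : ℝ) (β γ : ℂ) (τ : ℝ) :
    besselKer Y (β + γ) τ = besselKer Y β τ * cexp (γ * τ) := by
  rw [besselKer, besselKer, ← Complex.exp_add]
  ring_nf

theorem prod_besselKer_add_single {ι : Type*} [Fintype ι] [DecidableEq ι] (Y : ι → ℝ)
    (β : ι → ℂ) (γ : ℂ) (i : ι) (τ : ι → ℝ) :
    ∏ j, besselKer (Y j) (β j + (Pi.single i γ : ι → ℂ) j) (τ j) =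
      (∏ j, besselKer (Y j) (β j) (τ j)) * cexp (γ * τ i) := by
  simp only [besselKer_add, Finset.prod_mul_distrib, ← Complex.exp_sum]
  simp [Pi.single_apply]

theorem pi_mul_exp_cpow (x : ℝ) (c : ℂ) :
    ((Real.pi * Real.exp x : ℝ) : ℂ) ^ c = cexp (c * Real.log Real.pi) * cexp (c * x) := by
  rw [← Complex.exp_add, ← mul_add, ← ofReal_add, ← ofReal_exp_cpow, Real.exp_add,
    Real.exp_log Real.pi_pos]

theorem cexp_mul_cpow_mul_cpow_eq_besselKer (x τ : ℝ) (α β : ℂ) :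
    cexp (((-(Real.pi * Real.exp x) ^ 2 * Real.exp τ - 1 / Real.exp τ : ℝ) : ℂ)) *
        ((Real.pi * Real.exp x : ℝ) : ℂ) ^ α * ((Real.exp τ : ℝ) : ℂ) ^ β =
      cexp (α * Real.log Real.pi) * cexp (α * x) *
        besselKer (Real.pi ^ 2 * Real.exp (2 * x)) β τ := by
  have hexp : -(Real.pi * Real.exp x) ^ 2 * Real.exp τ - 1 / Real.exp τ =
      -(Real.pi ^ 2 * Real.exp (2 * x) * Real.exp τ) - Real.exp (-τ) := by
    rw [Real.exp_neg, two_mul, Real.exp_add]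
    ring
  rw [hexp, pi_mul_exp_cpow, ofReal_exp_cpow, besselKer, Complex.exp_add]
  ring

theorem exists_logWhitt_add_two_eq_whitStep (k : ℕ) (a : ℕ → ℂ) :
    ∃ κ : ℂ, logWhitt (k + 2) a = whitStep (k + 1) (logWhitt (k + 1) (tildeA (k + 3) a)) κ
      (fun j => ((k + 2 - j : ℕ) : ℂ) * a 0 / ((k + 2 : ℕ) : ℂ))
      (fun j => ((k + 3 : ℕ) : ℂ) * a 0 / (2 * ((k + 2 : ℕ) : ℂ)) +
        (Pi.single (Fin.last (k + 1)) (-(sumA (k + 3) a) / 2) : Fin (k + 2) → ℂ) j) := by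
  refine ⟨(∏ j : Fin (k + 2), cexp (((k + 2 - j : ℕ) : ℂ) * a 0 / ((k + 2 : ℕ) : ℂ) *
    Real.log Real.pi)) * cexp (-(sumA (k + 3) a) / 2 * Real.log Real.pi), funext fun x => ?_⟩
  have hx (j : Fin (k + 2)) : extR (fun j => Real.exp (x j)) j = Real.exp (x j) :=
    extR_coe (fun j => Real.exp (x j)) j
  change WhittAr (k + 3) a _ = _
  simp only [WhittAr, whitStep]
  rw [integral_posSet_eq_integral_exp, ← integral_const_mul]
  refine integral_congr_ae (Filter.Eventually.of_forall fun τ => ?_)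
  have hτ (j : Fin (k + 2)) : extR (fun j => Real.exp (τ j)) j = Real.exp (τ j) :=
    extR_coe (fun j => Real.exp (τ j)) j
  have hτl : extR (fun j => Real.exp (τ j)) (k + 1) = Real.exp (τ (Fin.last (k + 1))) :=
    hτ (Fin.last (k + 1))
  have hΨ : WhittAr (k + 2) (tildeA (k + 3) a) (fun j => extR (fun j => Real.exp (x j)) (j + 1) *
      √(extR (fun j => Real.exp (τ j)) (j + 1) / extR (fun j => Real.exp (τ j)) j)) =
      logWhitt (k + 1) (tildeA (k + 3) a) (fun j => x j.succ + (τ j.succ - τ j.castSucc) / 2) := by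
    refine WhittAr_eq_logWhitt (k + 1) _ _ _ fun j => ?_
    have h₀ := hτ j.castSucc
    have h₁ := hτ j.succ
    have h₂ := hx j.succ
    simp only [Fin.val_castSucc, Fin.val_succ] at h₀ h₁ h₂
    rw [h₀, h₁, h₂, ← Real.exp_sub, ← Real.exp_half, ← Real.exp_add]
  have hne : (∏ j : Fin (k + 2), ((Real.exp (τ j) : ℝ) : ℂ)) ≠ 0 :=
    Finset.prod_ne_zero_iff.2 fun j _ => by exact_mod_cast (Real.exp_pos _).ne'
  beta_reduce
  rw [hΨ]
  simp only [Finset.prod_range, hx, hτ, hτl, real_smul, ofReal_prod, whitKer,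
    cexp_mul_cpow_mul_cpow_eq_besselKer, prod_besselKer_add_single]
  rw [pi_mul_exp_cpow]
  simp only [Finset.prod_mul_distrib, Complex.exp_sum]
  rw [← div_eq_mul_inv, mul_div_cancel₀ _ hne]
  ring

/-- The functions obtained from a constant by the recursion with imaginary exponents: the class
of Whittaker functions in logarithmic coordinates to which all estimates apply. -/
inductive IsLogWhittaker : ∀ {k : ℕ}, ((Fin k → ℝ) → ℂ) → Prop
  | one : IsLogWhittaker (k := 0) fun _ => 1
  | step {k : ℕ} {Ψ : (Fin k → ℝ) → ℂ} (hΨ : IsLogWhittaker Ψ) (κ : ℂ) {A B : Fin (k + 1) → ℂ}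
      (hA : ∀ j, (A j).re = 0) (hB : ∀ j, (B j).re = 0) : IsLogWhittaker (whitStep k Ψ κ A B)

theorem re_natCast_mul_div_natCast_eq_zero {z : ℂ} (hz : z.re = 0) (m n : ℕ) :
    ((m : ℂ) * z / (n : ℂ)).re = 0 := by
  simp [Complex.div_natCast_re, hz]

theorem re_sumA_eq_zero {n : ℕ} {a : ℕ → ℂ} (ha : ∀ j < n, (a j).re = 0) :
    (sumA n a).re = 0 := by
  rw [sumA, Complex.re_sum]
  exact Finset.sum_eq_zero fun j hj => ha j (Finset.mem_range.1 hj)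

theorem re_tildeA_eq_zero {n : ℕ} {a : ℕ → ℂ} (ha : ∀ j < n + 1, (a j).re = 0) {j : ℕ}
    (hj : j < n) : (tildeA (n + 1) a j).re = 0 := by
  have hn : ((n + 1 : ℕ) : ℂ) - 1 = (n : ℂ) := by push_cast; ring
  rw [tildeA, Complex.add_re, hn, Complex.div_natCast_re, ha (j + 1) (by omega),
    ha 0 (by omega), zero_div, add_zero]

theorem isLogWhittaker_logWhitt {k : ℕ} {a : ℕ → ℂ} (ha : ∀ j < k + 1, (a j).re = 0) :
    IsLogWhittaker (logWhitt k a) := by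
  induction k generalizing a with
  | zero => exact logWhitt_zero a ▸ .one
  | succ k ih =>
    have h0 : (a 0).re = 0 := ha 0 (by omega)
    cases k with
    | zero =>
      rw [logWhitt_one]
      refine .step .one _ (fun _ => h0) fun _ => ?_
      simp [h0, ha 1 (by omega)]
    | succ k =>
      obtain ⟨κ, hκ⟩ := exists_logWhitt_add_two_eq_whitStep k a
      rw [hκ]
      refine .step (ih fun j hj => re_tildeA_eq_zero ha hj) κ
        (fun j => re_natCast_mul_div_natCast_eq_zero h0 _ _) fun j => ?_
      have hlast : (-(sumA (k + 3) a) / 2).re = 0 := by simp [re_sumA_eq_zero ha]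
      rw [Complex.add_re, ← Nat.cast_ofNat (n := 2), ← Nat.cast_mul,
        re_natCast_mul_div_natCast_eq_zero h0, zero_add, Pi.single_apply]
      split_ifs <;> simp [hlast]

theorem sum_mul_shift_add_sum_mul {k : ℕ} (δ : Fin k → ℝ) (ε x τ : Fin (k + 1) → ℝ) :
    ∑ j, δ j * (x j.succ + (τ j.succ - τ j.castSucc) / 2) +
        ∑ j, (ε j - (Fin.cons 0 δ : Fin (k + 1) → ℝ) j) / 2 * (2 * x j + τ j) =
      ∑ j, ε j * x j + ∑ j, (ε j - (Fin.snoc δ 0 : Fin (k + 1) → ℝ) j) / 2 * τ j := by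
  have hcons (f : Fin (k + 1) → ℝ) :
      ∑ j, (Fin.cons 0 δ : Fin (k + 1) → ℝ) j * f j = ∑ j, δ j * f j.succ := by
    simp [Fin.sum_univ_succ]
  have hsnoc (f : Fin (k + 1) → ℝ) :
      ∑ j, (Fin.snoc δ 0 : Fin (k + 1) → ℝ) j * f j = ∑ j, δ j * f j.castSucc := by
    simp [Fin.sum_univ_castSucc]
  calc _ = ∑ j, δ j * (x j.succ + (τ j.succ - τ j.castSucc) / 2) +
        (∑ j, ε j * (x j + τ j / 2) -
          ∑ j, (Fin.cons 0 δ : Fin (k + 1) → ℝ) j * (x j + τ j / 2)) := by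
        rw [← Finset.sum_sub_distrib]
        exact congrArg _ (Finset.sum_congr rfl fun j _ => by ring)
    _ = ∑ j, ε j * (x j + τ j / 2) -
        ∑ j, (Fin.snoc δ 0 : Fin (k + 1) → ℝ) j * (τ j / 2) := by
        rw [hcons, hsnoc, add_sub_left_comm, ← Finset.sum_sub_distrib, sub_eq_add_neg,
          ← Finset.sum_neg_distrib]
        exact congrArg _ (Finset.sum_congr rfl fun j _ => by ring)
    _ = _ := by
        rw [← Finset.sum_sub_distrib, ← Finset.sum_add_distrib]
        exact Finset.sum_congr rfl fun j _ => by ring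

theorem exists_norm_besselKer_exp_le {ρ : ℝ} (hρ : 0 < ρ) :
    ∃ D : ℝ, ∀ (l τ : ℝ) (β : ℂ), β.re = 0 →
      ‖besselKer (Real.pi ^ 2 * Real.exp (2 * l)) β τ‖ ≤
        D * Real.exp (-(ρ * (2 * l + τ)) - 1 * Real.exp (-τ)) := by
  obtain ⟨D, hD⟩ := exists_exp_neg_mul_exp_le (pow_pos Real.pi_pos 2) hρ
  refine ⟨D, fun l τ β hβ => ?_⟩
  rw [norm_besselKer, hβ, zero_mul, add_zero, one_mul, mul_assoc, ← Real.exp_add, sub_eq_add_neg,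
    sub_eq_add_neg, Real.exp_add, Real.exp_add (-(ρ * _)), ← mul_assoc]
  exact mul_le_mul_of_nonneg_right (hD _) (Real.exp_pos _).le

theorem exists_pos_forall_lt_castSucc_and_lt_succ {k : ℕ} {ε : Fin (k + 1) → ℝ}
    (hε : ∀ j, 0 < ε j) :
    ∃ δ : Fin k → ℝ, (∀ j, 0 < δ j) ∧ (∀ j, (Fin.cons 0 δ : Fin (k + 1) → ℝ) j < ε j) ∧
      ∀ j, (Fin.snoc δ 0 : Fin (k + 1) → ℝ) j < ε j := by
  choose δ hδ hlt using fun j : Fin k => exists_between (lt_min (hε j.castSucc) (hε j.succ))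
  refine ⟨δ, hδ, Fin.cases ?_ fun j => ?_, Fin.lastCases ?_ fun j => ?_⟩
  · simpa using hε 0
  · simpa using (hlt j).trans_le (min_le_right _ _)
  · simpa using hε (Fin.last k)
  · simpa using (hlt j).trans_le (min_le_left _ _)

namespace IsExpDominated

variable {k : ℕ} {Ψ : (Fin k → ℝ) → ℂ}

theorem exists_norm_whitKer_le (hΨ : IsExpDominated Ψ) {B : Fin (k + 1) → ℂ}
    (hB : ∀ j, (B j).re = 0) (ε : Fin (k + 1) → ℝ) (hε : ∀ j, 0 < ε j) :
    ∃ G : (Fin (k + 1) → ℝ) → ℝ, Integrable G ∧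
      ∀ x τ, ‖whitKer k Ψ B x τ‖ ≤ Real.exp (-∑ j, ε j * x j) * G τ := by
  obtain ⟨δ, hδ, hcons, hsnoc⟩ := exists_pos_forall_lt_castSucc_and_lt_succ hε
  obtain ⟨C, hC⟩ := hΨ.exists_norm_le δ hδ
  choose D hD using fun j => exists_norm_besselKer_exp_le (half_pos (sub_pos.2 (hcons j)))
  set η : Fin (k + 1) → ℝ := fun j => (ε j - (Fin.snoc δ 0 : Fin (k + 1) → ℝ) j) / 2 with hη
  refine ⟨fun τ => C * ∏ j, (D j * Real.exp (-(η j * τ j) - 1 * Real.exp (-τ j))),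
    (Integrable.fintype_prod fun j => (integrable_exp_neg_mul_sub_exp one_pos
      (half_pos (sub_pos.2 (hsnoc j)))).const_mul (D j)).const_mul C, fun x τ => ?_⟩
  have hprod := Finset.prod_le_prod (s := Finset.univ) (fun j _ => norm_nonneg _)
    fun j _ => hD j (x j) (τ j) (B j) (hB j)
  rw [whitKer, norm_mul, norm_prod]
  refine (mul_le_mul (hC _) hprod (by positivity) ((norm_nonneg _).trans (hC _))).trans_eq ?_
  have hsum := sum_mul_shift_add_sum_mul δ ε x τ
  have hexp := congrArg Real.exp (neg_inj.2 hsum)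
  rw [neg_add, neg_add, Real.exp_add, Real.exp_add] at hexp
  simp only [Real.exp_sub, Finset.prod_mul_distrib, Finset.prod_div_distrib]
  simp only [← Real.exp_sum, Finset.sum_neg_distrib, hη]
  linear_combination (C * (∏ j, D j) / Real.exp (∑ j, 1 * Real.exp (-τ j))) * hexp

theorem continuous_whitKer (hΨ : IsExpDominated Ψ) (B : Fin (k + 1) → ℂ) :
    Continuous fun p : (Fin (k + 1) → ℝ) × (Fin (k + 1) → ℝ) => whitKer k Ψ B p.1 p.2 := by
  have hc := hΨ.continuous
  unfold whitKer besselKer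
  fun_prop

theorem continuous_integral_whitKer (hΨ : IsExpDominated Ψ) {B : Fin (k + 1) → ℂ}
    (hB : ∀ j, (B j).re = 0) : Continuous fun x => ∫ τ, whitKer k Ψ B x τ := by
  obtain ⟨G, hG, hle⟩ := hΨ.exists_norm_whitKer_le hB (fun _ => 1) fun _ => one_pos
  have hG0 (τ : Fin (k + 1) → ℝ) : 0 ≤ G τ :=
    nonneg_of_mul_nonneg_right ((norm_nonneg _).trans (hle 0 τ)) (Real.exp_pos _)
  have hK := hΨ.continuous_whitKer B
  have hE : Continuous fun x : Fin (k + 1) → ℝ => Real.exp (-∑ j, 1 * x j) := by fun_prop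
  refine continuous_iff_continuousAt.2 fun x₀ => continuousAt_of_dominated
    (bound := fun τ => (Real.exp (-∑ j, 1 * x₀ j) + 1) * G τ)
    (Filter.Eventually.of_forall fun x =>
      (hK.comp (Continuous.prodMk_right x)).aestronglyMeasurable) ?_ (hG.const_mul _)
    (Filter.Eventually.of_forall fun τ => (hK.comp (Continuous.prodMk_left τ)).continuousAt)
  filter_upwards [hE.continuousAt.eventually_le_const (lt_add_one _)] with x hx
  exact Filter.Eventually.of_forall fun τ =>
    (hle x τ).trans (mul_le_mul_of_nonneg_right hx (hG0 τ))

end IsExpDominated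

theorem isExpDominated_whitStep {k : ℕ} {Ψ : (Fin k → ℝ) → ℂ} (hΨ : IsExpDominated Ψ) (κ : ℂ)
    {A B : Fin (k + 1) → ℂ} (hA : ∀ j, (A j).re = 0) (hB : ∀ j, (B j).re = 0) :
    IsExpDominated (whitStep k Ψ κ A B) where
  continuous := .mul (by fun_prop) (hΨ.continuous_integral_whitKer hB)
  exists_norm_le ε hε := by
    obtain ⟨G, hG, hle⟩ := hΨ.exists_norm_whitKer_le hB ε hε
    refine ⟨‖κ‖ * ∫ τ, G τ, fun x => ?_⟩
    have hint : ‖∫ τ, whitKer k Ψ B x τ‖ ≤ Real.exp (-∑ j, ε j * x j) * ∫ τ, G τ := by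
      rw [← integral_const_mul]
      exact norm_integral_le_of_norm_le (hG.const_mul _) (Filter.Eventually.of_forall (hle x))
    have hexp : ‖cexp (∑ j, A j * x j)‖ = 1 := by simp [norm_cexp_sum_mul_ofReal, hA]
    rw [whitStep, norm_mul, norm_mul, hexp, mul_one, mul_assoc, mul_comm (∫ τ, G τ)]
    exact mul_le_mul_of_nonneg_left hint (norm_nonneg _)

theorem IsLogWhittaker.isExpDominated {k : ℕ} {Ψ : (Fin k → ℝ) → ℂ} (hΨ : IsLogWhittaker Ψ) :
    IsExpDominated Ψ := by
  induction hΨ with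
  | one => exact ⟨continuous_const, fun ε _ => ⟨1, fun x => by simp⟩⟩
  | step _ κ hA hB ih => exact isExpDominated_whitStep ih κ hA hB

/-! ### The Laplace transform of a recursion step -/

theorem measurePreserving_shear {T : Type*} [MeasurableSpace T] (μ : Measure T) [SFinite μ]
    {k : ℕ} {L : T → Fin k → ℝ} (hL : Measurable L) :
    MeasurePreserving (fun p : T × (Fin k → ℝ) => (p.1, p.2 + L p.1))
      (μ.prod volume) (μ.prod volume) :=
  (MeasurePreserving.id μ).skew_product (by fun_prop)
    (Filter.Eventually.of_forall fun t => (measurePreserving_add_right volume (L t)).map_eq)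

theorem integral_integral_eq_integral_integral_add {T : Type*} [MeasurableSpace T]
    {μ : Measure T} [SFinite μ] {k : ℕ} {L : T → Fin k → ℝ} (hL : Measurable L)
    {F : (Fin k → ℝ) × T → ℂ} (hF : Integrable F (volume.prod μ)) :
    ∫ x, ∫ t, F (x, t) ∂μ = ∫ x, ∫ t, F (x + L t, t) ∂μ := by
  have hF' := (measurePreserving_shear μ hL).integrable_comp_of_integrable hF.swap
  rw [integral_integral_swap (f := fun x t => F (x, t)) hF,
    integral_integral_swap (f := fun x t => F (x + L t, t)) hF'.swap]
  exact integral_congr_ae (Filter.Eventually.of_forall fun t =>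
    (integral_add_right_eq_self (fun x => F (x, t)) (L t)).symm)

theorem integral_mul_fin_succ {k : ℕ} (u : ℝ → ℂ) (v : (Fin k → ℝ) → ℂ) :
    ∫ x : Fin (k + 1) → ℝ, u (x 0) * v (fun j => x j.succ) = (∫ t, u t) * ∫ y, v y := by
  rw [← integral_prod_mul u v]
  exact (volume_preserving_piFinSuccAbove (fun _ : Fin (k + 1) => ℝ) 0).integral_comp'
    (fun p : ℝ × (Fin k → ℝ) => u p.1 * v p.2)

theorem integral_cexp_mul_sub_exp_eq_besselInt (z : ℂ) :
    ∫ u : ℝ, cexp (z * u) * cexp (-((Real.pi ^ 2 * Real.exp (2 * u) : ℝ) : ℂ)) =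
      1 / 2 * cexp (-(z * Real.log Real.pi)) * besselInt 0 (-(z / 2)) := by
  set f : ℝ → ℂ := fun u =>
    cexp (z * u) * cexp (-((Real.pi ^ 2 * Real.exp (2 * u) : ℝ) : ℂ)) with hf
  have hscale : ∫ u, f u = 1 / 2 * ∫ τ, f (-1 / 2 * τ) := by
    rw [Measure.integral_comp_mul_left f (-1 / 2),
      show |(-1 / 2 : ℝ)⁻¹| = 2 by norm_num [abs_of_neg], Complex.real_smul]
    push_cast
    ring
  rw [hscale, ← integral_add_right_eq_self _ (2 * Real.log Real.pi), besselInt, mul_assoc,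
    ← integral_const_mul (cexp _)]
  refine congrArg (1 / 2 * · : ℂ → ℂ) (integral_congr_ae (Filter.Eventually.of_forall fun τ => ?_))
  have hexp : Real.pi ^ 2 * Real.exp (2 * (-1 / 2 * (τ + 2 * Real.log Real.pi))) =
      Real.exp (-τ) := by
    rw [show 2 * (-1 / 2 * (τ + 2 * Real.log Real.pi)) = -τ - (Real.log Real.pi + Real.log Real.pi)
      by ring, Real.exp_sub, Real.exp_add, Real.exp_log Real.pi_pos]
    field_simp
  simp only [hf, besselKer]
  rw [hexp, ← Complex.exp_add, ← Complex.exp_add]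
  push_cast
  ring_nf

/-- The increments of the chain `0, y₀, …, y_{k-1}, 0`. -/
def chainIncr {E : Type*} [AddCommGroup E] [Module ℝ E] {k : ℕ} :
    (Fin k → E) →ₗ[ℝ] (Fin (k + 1) → E) where
  toFun y r := (Fin.snoc y 0 : Fin (k + 1) → E) r - (Fin.cons 0 y : Fin (k + 1) → E) r
  map_add' y z := by
    funext r
    have hs : (Fin.snoc (y + z) 0 : Fin (k + 1) → E) r =
        (Fin.snoc y 0 : Fin (k + 1) → E) r + (Fin.snoc z 0 : Fin (k + 1) → E) r := by
      induction r using Fin.lastCases <;> simp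
    have hc : (Fin.cons 0 (y + z) : Fin (k + 1) → E) r =
        (Fin.cons 0 y : Fin (k + 1) → E) r + (Fin.cons 0 z : Fin (k + 1) → E) r := by
      induction r using Fin.cases <;> simp
    rw [hs, hc, Pi.add_apply, add_sub_add_comm]
  map_smul' c y := by
    funext r
    have hs : (Fin.snoc (c • y) 0 : Fin (k + 1) → E) r =
        c • (Fin.snoc y 0 : Fin (k + 1) → E) r := by
      induction r using Fin.lastCases <;> simp
    have hc : (Fin.cons 0 (c • y) : Fin (k + 1) → E) r =
        c • (Fin.cons 0 y : Fin (k + 1) → E) r := by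
      induction r using Fin.cases <;> simp
    rw [hs, hc, Pi.smul_apply, smul_sub, RingHom.id_apply]

theorem chainIncr_apply {E : Type*} [AddCommGroup E] [Module ℝ E] {k : ℕ} (y : Fin k → E)
    (r : Fin (k + 1)) :
    chainIncr y r = (Fin.snoc y 0 : Fin (k + 1) → E) r - (Fin.cons 0 y : Fin (k + 1) → E) r :=
  rfl

theorem chainIncr_injective {E : Type*} [AddCommGroup E] [Module ℝ E] {k : ℕ} :
    Function.Injective (chainIncr : (Fin k → E) →ₗ[ℝ] (Fin (k + 1) → E)) := by
  refine (injective_iff_map_eq_zero _).2 fun y hy => ?_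
  have hstep (r : Fin (k + 1)) :
      (Fin.snoc y 0 : Fin (k + 1) → E) r = (Fin.cons 0 y : Fin (k + 1) → E) r :=
    sub_eq_zero.1 (congrFun hy r)
  have hcons (r : Fin (k + 1)) : (Fin.cons 0 y : Fin (k + 1) → E) r = 0 := by
    induction r using Fin.induction with
    | zero => simp
    | succ j ih => simpa [ih] using (hstep j.castSucc)
  funext j
  simpa using hcons j.succ

theorem map_chainIncr {E F : Type*} [AddCommGroup E] [Module ℝ E] [AddCommGroup F] [Module ℝ F]
    (f : E →ₗ[ℝ] F) {k : ℕ} (y : Fin k → E) (r : Fin (k + 1)) :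
    f (chainIncr y r) = chainIncr (fun j => f (y j)) r := by
  have hs : f ((Fin.snoc y 0 : Fin (k + 1) → E) r) =
      (Fin.snoc (fun j => f (y j)) 0 : Fin (k + 1) → F) r := by
    induction r using Fin.lastCases <;> simp
  have hc : f ((Fin.cons 0 y : Fin (k + 1) → E) r) =
      (Fin.cons 0 (fun j => f (y j)) : Fin (k + 1) → F) r := by
    induction r using Fin.cases <;> simp
  rw [chainIncr_apply, chainIncr_apply, map_sub, hs, hc]

/-- The translation of `x` by which the variables `x` and `τ` of `whitKer` separate. -/
def whitShift {k : ℕ} (τ : Fin (k + 1) → ℝ) : Fin (k + 1) → ℝ :=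
  Fin.cons (-(τ 0 / 2)) fun j => -((τ j.succ - τ j.castSucc) / 2)

theorem continuous_whitShift {k : ℕ} : Continuous (whitShift (k := k)) := by
  refine continuous_pi (Fin.cases ?_ fun j => ?_)
  · simp only [whitShift, Fin.cons_zero]
    fun_prop
  · simp only [whitShift, Fin.cons_succ]
    fun_prop

theorem sum_mul_whitShift {k : ℕ} (Z : Fin (k + 1) → ℂ) (τ : Fin (k + 1) → ℝ) :
    ∑ j, Z j * whitShift τ j = ∑ j : Fin (k + 1), chainIncr Z j.succ / 2 * τ j := by
  have hsnoc : ∑ j : Fin (k + 1), (Fin.snoc Z 0 : Fin (k + 2) → ℂ) j.succ * τ j =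
      ∑ j : Fin k, Z j.succ * τ j.castSucc := by
    rw [Fin.sum_univ_castSucc, Fin.succ_last, Fin.snoc_last, zero_mul, add_zero]
    simp only [Fin.succ_castSucc, Fin.snoc_castSucc]
  have hincr : ∑ j : Fin (k + 1), chainIncr Z j.succ / 2 * τ j =
      (∑ j : Fin k, Z j.succ * τ j.castSucc) / 2 - (∑ j, Z j * τ j) / 2 := by
    rw [← hsnoc, Finset.sum_div, Finset.sum_div, ← Finset.sum_sub_distrib]
    exact Finset.sum_congr rfl fun j _ => by rw [chainIncr_apply, Fin.cons_succ]; ring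
  rw [hincr, Fin.sum_univ_succ, Fin.sum_univ_succ (fun j => Z j * (τ j : ℂ)), add_div,
    Finset.sum_div, Finset.sum_div, ← sub_sub, sub_right_comm, ← Finset.sum_sub_distrib,
    sub_eq_neg_add]
  simp only [whitShift, Fin.cons_zero, Fin.cons_succ]
  push_cast
  exact congrArg₂ _ (by ring) (Finset.sum_congr rfl fun j _ => by ring)

/-- The first arguments of the functions `besselKer` into which `whitKer` separates. -/
def whitCoeff {k : ℕ} (l : Fin k → ℝ) : Fin (k + 1) → ℝ :=
  Fin.snoc (fun j => Real.pi ^ 2 * Real.exp (2 * l j)) 0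

theorem besselKer_eq_cexp_mul_besselKer_zero (Y : ℝ) (β : ℂ) (τ : ℝ) :
    besselKer Y β τ = cexp (-((Y * Real.exp τ : ℝ) : ℂ)) * besselKer 0 β τ := by
  rw [besselKer, besselKer, ← Complex.exp_add]
  push_cast
  ring_nf

theorem prod_besselKer_add_whitShift {k : ℕ} (B : Fin (k + 1) → ℂ) (x τ : Fin (k + 1) → ℝ) :
    ∏ j, besselKer (Real.pi ^ 2 * Real.exp (2 * (x + whitShift τ) j)) (B j) (τ j) =
      cexp (-((Real.pi ^ 2 * Real.exp (2 * x 0) : ℝ) : ℂ)) *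
        ∏ j, besselKer (whitCoeff (fun j => x j.succ) j) (B j) (τ j) := by
  have hzero : Real.pi ^ 2 * Real.exp (2 * (x + whitShift τ) 0) * Real.exp (τ 0) =
      Real.pi ^ 2 * Real.exp (2 * x 0) := by
    rw [mul_assoc, ← Real.exp_add, Pi.add_apply, whitShift, Fin.cons_zero]
    ring_nf
  have hsucc (j : Fin k) :
      Real.pi ^ 2 * Real.exp (2 * (x + whitShift τ) j.succ) * Real.exp (τ j.succ) =
        Real.pi ^ 2 * Real.exp (2 * x j.succ) * Real.exp (τ j.castSucc) := by
    rw [mul_assoc, mul_assoc, ← Real.exp_add, ← Real.exp_add, Pi.add_apply, whitShift,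
      Fin.cons_succ]
    ring_nf
  have hprod (Y : Fin (k + 1) → ℝ) : ∏ j, besselKer (Y j) (B j) (τ j) =
      (∏ j, cexp (-((Y j * Real.exp (τ j) : ℝ) : ℂ))) * ∏ j, besselKer 0 (B j) (τ j) := by
    rw [← Finset.prod_mul_distrib]
    exact Finset.prod_congr rfl fun j _ => besselKer_eq_cexp_mul_besselKer_zero _ _ _
  rw [hprod, hprod (whitCoeff _), ← mul_assoc, Fin.prod_univ_succ, Fin.prod_univ_castSucc
    (fun j => cexp (-((whitCoeff (fun j => x j.succ) j * Real.exp (τ j) : ℝ) : ℂ)))]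
  simp only [hzero, hsucc, whitCoeff, Fin.snoc_castSucc, Fin.snoc_last, zero_mul, ofReal_zero,
    neg_zero, Complex.exp_zero, mul_one]

theorem whitKer_add_whitShift_mul_cexp {k : ℕ} (Ψ : (Fin k → ℝ) → ℂ) (B Z : Fin (k + 1) → ℂ)
    (x τ : Fin (k + 1) → ℝ) :
    whitKer k Ψ B (x + whitShift τ) τ * cexp (∑ j, Z j * (x + whitShift τ) j) =
      cexp (Z 0 * x 0) * cexp (-((Real.pi ^ 2 * Real.exp (2 * x 0) : ℝ) : ℂ)) *
        (Ψ (fun j => x j.succ) * cexp (∑ j : Fin k, Z j.succ * x j.succ) *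
          ∏ j, besselKer (whitCoeff (fun j => x j.succ) j) (B j + chainIncr Z j.succ / 2)
            (τ j)) := by
  have hΨ : (fun j : Fin k => (x + whitShift τ) j.succ + (τ j.succ - τ j.castSucc) / 2) =
      fun j => x j.succ := by
    funext j
    simp [whitShift]
  have hZ : cexp (∑ j, Z j * (x + whitShift τ) j) = cexp (Z 0 * x 0) *
      cexp (∑ j : Fin k, Z j.succ * x j.succ) *
        ∏ j : Fin (k + 1), cexp (chainIncr Z j.succ / 2 * τ j) := by
    simp only [Pi.add_apply, ofReal_add, mul_add, Finset.sum_add_distrib, Complex.exp_add]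
    rw [sum_mul_whitShift, Fin.sum_univ_succ, Complex.exp_add, ← Complex.exp_sum]
  rw [whitKer, hΨ, prod_besselKer_add_whitShift, hZ]
  simp only [besselKer_add, Finset.prod_mul_distrib]
  ring

theorem IsExpDominated.laplace_whitStep {k : ℕ} {Ψ : (Fin k → ℝ) → ℂ} (hΨ : IsExpDominated Ψ)
    (κ : ℂ) {A B S : Fin (k + 1) → ℂ} (hB : ∀ j, (B j).re = 0) (hS : ∀ j, 0 < ((A + S) j).re) :
    laplace (whitStep k Ψ κ A B) S =
      κ * ((1 / 2 * cexp (-((A + S) 0 * Real.log Real.pi)) * besselInt 0 (-((A + S) 0 / 2))) *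
        ∫ l, Ψ l * cexp (∑ j : Fin k, (A + S) j.succ * l j) *
          ∏ j, besselInt (whitCoeff l j) (B j + chainIncr (A + S) j.succ / 2)) := by
  have hF := integrable_prod_mul_cexp_of_forall_norm_le (μ := volume)
    (hΨ.continuous_whitKer B).aestronglyMeasurable (hΨ.exists_norm_whitKer_le hB) hS
  calc _ = κ * ∫ x, ∫ τ, whitKer k Ψ B x τ * cexp (∑ j, (A + S) j * x j) := by
        rw [laplace, ← integral_const_mul]
        refine integral_congr_ae (Filter.Eventually.of_forall fun x => ?_)
        simp only [whitStep, Pi.add_apply, add_mul, Finset.sum_add_distrib, Complex.exp_add]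
        rw [integral_mul_const]
        ring
    _ = κ * ∫ x, ∫ τ, whitKer k Ψ B (x + whitShift τ) τ *
          cexp (∑ j, (A + S) j * (x + whitShift τ) j) := by
        rw [integral_integral_eq_integral_integral_add continuous_whitShift.measurable hF]
    _ = _ := by
        rw [← integral_cexp_mul_sub_exp_eq_besselInt, ← integral_mul_fin_succ]
        refine congrArg (κ * ·) (integral_congr_ae (Filter.Eventually.of_forall fun x => ?_))
        simp only [whitKer_add_whitShift_mul_cexp, besselInt, integral_const_mul]
        rw [integral_fintype_prod_volume_eq_prod]

theorem chainIncr_zero {E : Type*} [AddCommGroup E] [Module ℝ E] {k : ℕ} (y : Fin (k + 1) → E) :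
    chainIncr y 0 = y 0 := by
  rw [chainIncr_apply, Fin.cons_zero, sub_zero]
  exact Fin.snoc_castSucc (α := fun _ => E) 0 y 0

theorem chainIncr_succ_castSucc {E : Type*} [AddCommGroup E] [Module ℝ E] {k : ℕ}
    (y : Fin (k + 1) → E) (j : Fin k) :
    chainIncr y j.castSucc.succ = y j.succ - y j.castSucc := by
  rw [chainIncr_apply, Fin.cons_succ, Fin.succ_castSucc, Fin.snoc_castSucc]

theorem chainIncr_succ_last {E : Type*} [AddCommGroup E] [Module ℝ E] {k : ℕ}
    (y : Fin (k + 1) → E) : chainIncr y (Fin.last k).succ = -y (Fin.last k) := by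
  rw [chainIncr_apply, Fin.cons_succ, Fin.succ_last, Fin.snoc_last, zero_sub]

theorem re_chainIncr {k : ℕ} (Z : Fin k → ℂ) (r : Fin (k + 1)) :
    (chainIncr Z r).re = chainIncr (fun j => (Z j).re) r :=
  map_chainIncr Complex.reLm Z r

theorem im_chainIncr {k : ℕ} (Z : Fin k → ℂ) (r : Fin (k + 1)) :
    (chainIncr Z r).im = chainIncr (fun j => (Z j).im) r :=
  map_chainIncr Complex.imLm Z r

theorem exists_norm_prod_besselInt_whitCoeff_le {k : ℕ} {σ : Fin (k + 1) → ℝ}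
    (hσ : ∀ j, 0 < σ j) :
    ∃ (C : ℝ) (ρ : Fin k → ℝ), (∀ j, 2 * ρ j < σ j.succ) ∧
      ∀ (l : Fin k → ℝ) (β : Fin (k + 1) → ℂ), (∀ j, (β j).re = chainIncr σ j.succ / 2) →
        ‖∏ j, besselInt (whitCoeff l j) (β j)‖ ≤
          C * Real.exp (-∑ j, 2 * ρ j * l j) * ∏ j, (1 + (β j).im ^ 2)⁻¹ := by
  have hlt (j : Fin k) : max ((σ j.succ - σ j.castSucc) / 2) 0 < σ j.succ / 2 :=
    max_lt (by linarith [hσ j.castSucc]) (half_pos (hσ j.succ))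
  choose ρ hρ hρσ using fun j => exists_between (hlt j)
  choose C hC using fun j => exists_norm_besselInt_exp_le
    ((le_max_right _ _).trans_lt (hρ j)) ((le_max_left _ _).trans_lt (hρ j))
  obtain ⟨C₀, hC₀⟩ := exists_norm_besselInt_zero_le (neg_neg_of_pos (half_pos (hσ (Fin.last k))))
  refine ⟨(∏ j, C j) * C₀, ρ, fun j => by linarith [hρσ j], fun l β hβ => ?_⟩
  have hsucc (j : Fin k) := hC j (l j) (β j.castSucc)
    (by rw [hβ, chainIncr_succ_castSucc])
  have hlast := hC₀ (β (Fin.last k)) (by rw [hβ, chainIncr_succ_last, neg_div])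
  have hprod := Finset.prod_le_prod (s := Finset.univ) (fun j _ => norm_nonneg _)
    fun j _ => hsucc j
  simp only [Fin.prod_univ_castSucc, whitCoeff, Fin.snoc_castSucc, Fin.snoc_last, norm_mul,
    norm_prod]
  refine (mul_le_mul hprod hlast (norm_nonneg _)
    ((Finset.prod_nonneg fun j _ => norm_nonneg _).trans hprod)).trans_eq ?_
  simp only [Finset.prod_mul_distrib, ← Real.exp_sum, Finset.sum_neg_distrib]
  ring

theorem exists_norm_cexp_mul_besselInt_zero_le {σ : ℝ} (hσ : 0 < σ) :
    ∃ C : ℝ, ∀ z : ℂ, z.re = σ →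
      ‖1 / 2 * cexp (-(z * Real.log Real.pi)) * besselInt 0 (-(z / 2))‖ ≤
        C * (1 + (z / 2).im ^ 2)⁻¹ := by
  obtain ⟨C, hC⟩ := exists_norm_besselInt_zero_le (neg_neg_of_pos (half_pos hσ))
  refine ⟨1 / 2 * Real.exp (-(σ * Real.log Real.pi)) * C, fun z hz => ?_⟩
  have hB := hC (-(z / 2)) (by simp [hz])
  rw [neg_im, neg_sq] at hB
  rw [norm_mul, norm_mul, Complex.norm_exp, neg_re, re_mul_ofReal, hz, mul_assoc _ C]
  exact mul_le_mul (by norm_num) hB (norm_nonneg _) (by positivity)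

theorem IsExpDominated.exists_norm_integral_prod_besselInt_le {k : ℕ} {Ψ : (Fin k → ℝ) → ℂ}
    (hΨ : IsExpDominated Ψ) {σ : Fin (k + 1) → ℝ} (hσ : ∀ j, 0 < σ j) :
    ∃ C : ℝ, ∀ Z β : Fin (k + 1) → ℂ, (∀ j, (Z j).re = σ j) →
      (∀ j, (β j).re = chainIncr σ j.succ / 2) →
      ‖∫ l, Ψ l * cexp (∑ j : Fin k, Z j.succ * l j) * ∏ j, besselInt (whitCoeff l j) (β j)‖ ≤
        C * ∏ j, (1 + (β j).im ^ 2)⁻¹ := by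
  obtain ⟨C, ρ, hρ, hC⟩ := exists_norm_prod_besselInt_whitCoeff_le hσ
  have hint := (hΨ.integrable_mul_cexp (S := fun j => ((σ j.succ - 2 * ρ j : ℝ) : ℂ))
    fun j => by simpa using hρ j).norm
  refine ⟨(∫ l, ‖Ψ l * cexp (∑ j, ((σ j.succ - 2 * ρ j : ℝ) : ℂ) * l j)‖) * C,
    fun Z β hZ hβ => ?_⟩
  rw [mul_assoc, ← integral_mul_const]
  refine norm_integral_le_of_norm_le (hint.mul_const _) (Filter.Eventually.of_forall fun l => ?_)
  rw [norm_mul _ (∏ j, _)]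
  refine (mul_le_mul_of_nonneg_left (hC l β hβ) (norm_nonneg _)).trans_eq ?_
  simp only [norm_mul, norm_cexp_sum_mul_ofReal, hZ, ofReal_re, sub_mul, Finset.sum_sub_distrib,
    Real.exp_sub, Real.exp_neg]
  ring

theorem IsExpDominated.exists_norm_laplace_whitStep_le {k : ℕ} {Ψ : (Fin k → ℝ) → ℂ}
    (hΨ : IsExpDominated Ψ) (κ : ℂ) {A B : Fin (k + 1) → ℂ} (hA : ∀ j, (A j).re = 0)
    (hB : ∀ j, (B j).re = 0) {σ : Fin (k + 1) → ℝ} (hσ : ∀ j, 0 < σ j) :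
    ∃ C : ℝ, ∀ S : Fin (k + 1) → ℂ, (∀ j, (S j).re = σ j) →
      ‖laplace (whitStep k Ψ κ A B) S‖ ≤ C * ∏ r,
        (1 + ((Fin.cons 0 B : Fin (k + 2) → ℂ) r + chainIncr (A + S) r / 2).im ^ 2)⁻¹ := by
  obtain ⟨C₀, hC₀⟩ := exists_norm_cexp_mul_besselInt_zero_le (hσ 0)
  obtain ⟨C, hC⟩ := hΨ.exists_norm_integral_prod_besselInt_le hσ
  refine ⟨‖κ‖ * (C₀ * C), fun S hS => ?_⟩
  have hre (j : Fin (k + 1)) : ((A + S) j).re = σ j := by simp [hA, hS]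
  have hβ (j : Fin (k + 1)) : (B j + chainIncr (A + S) j.succ / 2).re =
      chainIncr σ j.succ / 2 := by
    rw [add_re, hB, zero_add, Complex.div_ofNat_re, re_chainIncr, funext hre]
  have hfirst := hC₀ _ (hre 0)
  rw [hΨ.laplace_whitStep κ hB fun j => (hσ j).trans_eq (hre j).symm, norm_mul, norm_mul,
    Fin.prod_univ_succ, chainIncr_zero]
  simp only [Fin.cons_zero, Fin.cons_succ, zero_add]
  refine (mul_le_mul_of_nonneg_left (mul_le_mul hfirst (hC _ _ hre hβ) (norm_nonneg _)
    ((norm_nonneg _).trans hfirst)) (norm_nonneg κ)).trans_eq ?_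
  ring

theorem IsLogWhittaker.exists_norm_laplace_le {k : ℕ} {Ψ : (Fin k → ℝ) → ℂ}
    (hΨ : IsLogWhittaker Ψ) {σ : Fin k → ℝ} (hσ : ∀ j, 0 < σ j) :
    ∃ (C : ℝ) (d : Fin (k + 1) → ℝ), ∀ S : Fin k → ℂ, (∀ j, (S j).re = σ j) →
      ‖laplace Ψ S‖ ≤ C * ∏ r, (1 + (d r + chainIncr (fun j => (S j).im) r / 2) ^ 2)⁻¹ := by
  cases hΨ with
  | one =>
    refine ⟨‖laplace (fun _ => 1) (0 : Fin 0 → ℂ)‖, 0, fun S _ => ?_⟩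
    have hS0 : chainIncr (fun j => (S j).im) = 0 := by
      rw [Subsingleton.elim (fun j => (S j).im) 0, map_zero]
    rw [hS0, Subsingleton.elim S 0]
    simp
  | @step k Ψ hΨ κ A B hA hB =>
    obtain ⟨C, hC⟩ := hΨ.isExpDominated.exists_norm_laplace_whitStep_le κ hA hB hσ
    refine ⟨C, fun r => ((Fin.cons 0 B : Fin (k + 2) → ℂ) r + chainIncr A r / 2).im,
      fun S hS => (hC S hS).trans_eq ?_⟩
    refine congrArg (C * ·) (Finset.prod_congr rfl fun r _ => ?_)
    rw [map_add, Pi.add_apply, add_div, ← add_assoc, add_im, Complex.div_ofNat_im (chainIncr S r),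
      im_chainIncr S]

theorem exists_injective_funLeft_comp {K ι κ : Type*} [Field K] [Finite κ]
    {L : (κ → K) →ₗ[K] (ι → K)} (hL : Function.Injective L) :
    ∃ a : κ → ι, Function.Injective a ∧ Function.Injective (LinearMap.funLeft K K a ∘ₗ L) := by
  have := Fintype.ofFinite κ
  let ℓ (i : ι) : Module.Dual K (κ → K) := LinearMap.proj i ∘ₗ L
  obtain ⟨κ', a, ha, hspan, hli⟩ := exists_linearIndependent' K ℓ
  have hinj : Function.Injective (LinearMap.funLeft K K a ∘ₗ L) := by
    refine (injective_iff_map_eq_zero _).2 fun t ht => (map_eq_zero_iff L hL).1 (funext fun i => ?_)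
    have hle : Submodule.span K (Set.range (ℓ ∘ a)) ≤ (Module.Dual.eval K (κ → K) t).ker :=
      Submodule.span_le.2 (Set.range_subset_iff.2 fun j => congrFun ht j)
    exact hle (hspan ▸ Submodule.subset_span (Set.mem_range_self i))
  have := hli.finite
  have := Fintype.ofFinite κ'
  have hcard : Fintype.card κ = Fintype.card κ' := by
    refine le_antisymm ?_ (hli.fintype_card_le_finrank.trans_eq ?_)
    · simpa using LinearMap.finrank_le_finrank_of_injective hinj
    · rw [Subspace.dual_finrank_eq, Module.finrank_fintype_fun_eq_card]
  let e : κ ≃ κ' := Fintype.equivOfCardEq hcard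
  exact ⟨a ∘ e, ha.comp e.injective, (LinearMap.funLeft_injective_of_surjective K K e
    e.surjective).comp hinj⟩

theorem integrable_comp_of_injective {κ : Type*} [Fintype κ] {T : (κ → ℝ) →ₗ[ℝ] (κ → ℝ)}
    (hT : Function.Injective T) {g : (κ → ℝ) → ℝ} (hg : Integrable g) :
    Integrable (g ∘ T) := by
  have hdet : LinearMap.det T ≠ 0 :=
    (LinearEquiv.isUnit_det' (LinearEquiv.ofInjectiveEndo T hT)).ne_zero
  refine Integrable.comp_aemeasurable ?_ (LinearMap.continuous_on_pi T).measurable.aemeasurable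
  rw [Measure.map_linearMap_addHaar_eq_smul_addHaar volume hdet]
  exact hg.smul_measure ENNReal.ofReal_ne_top

theorem integrable_prod_comp_linearMap {ι κ : Type*} [Fintype ι] [Fintype κ]
    {L : (κ → ℝ) →ₗ[ℝ] (ι → ℝ)} (hL : Function.Injective L) {f : ι → ℝ → ℝ}
    (hfc : ∀ i, Continuous (f i)) (hf : ∀ i, Integrable (f i)) (hf0 : ∀ i x, 0 ≤ f i x)
    (hf1 : ∀ i x, f i x ≤ 1) : Integrable fun t => ∏ i, f i (L t i) := by
  classical
  obtain ⟨a, ha, hinj⟩ := exists_injective_funLeft_comp hL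
  have hLc := LinearMap.continuous_on_pi L
  refine (integrable_comp_of_injective hinj (Integrable.fintype_prod fun j => hf (a j))).mono'
    (by fun_prop) (Filter.Eventually.of_forall fun t => ?_)
  rw [Real.norm_of_nonneg (Finset.prod_nonneg fun i _ => hf0 i _),
    ← Finset.prod_mul_prod_compl (Finset.univ.image a), Finset.prod_image ha.injOn]
  exact mul_le_of_le_one_right (Finset.prod_nonneg fun j _ => hf0 (a j) _)
    (Finset.prod_le_one (fun i _ => hf0 i _) fun i _ => hf1 i _)

theorem IsLogWhittaker.integrable_laplace_comp {k : ℕ} {Ψ : (Fin k → ℝ) → ℂ}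
    (hΨ : IsLogWhittaker Ψ) {S : Fin k → ℂ} (hS : ∀ j, 0 < (S j).re) {κ : Type*} [Fintype κ]
    {δ : (κ → ℝ) →ₗ[ℝ] (Fin k → ℝ)} (hδ : Function.Injective δ) :
    Integrable fun t => laplace Ψ fun j => S j + δ t j * I := by
  obtain ⟨C, d, hC⟩ := hΨ.exists_norm_laplace_le hS
  set c : Fin (k + 1) → ℝ := fun r => d r + chainIncr (fun j => (S j).im) r / 2
  have hint : Integrable fun t => ∏ r, (1 + (c r + chainIncr (δ t) r / 2) ^ 2)⁻¹ :=
    integrable_prod_comp_linearMap (L := chainIncr ∘ₗ δ) (chainIncr_injective.comp hδ)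
      (f := fun r y => (1 + (c r + y / 2) ^ 2)⁻¹)
      (fun r => by fun_prop (disch := intros; positivity))
      (fun r => (integrable_inv_one_add_sq.comp_add_left (c r)).comp_div two_ne_zero)
      (fun r y => by positivity)
      fun r y => inv_le_one_of_one_le₀ (le_add_of_nonneg_right (sq_nonneg _))
  refine (hint.const_mul C).mono' ((hΨ.isExpDominated.continuous_laplace hS).comp
    (LinearMap.continuous_on_pi δ)).aestronglyMeasurable (Filter.Eventually.of_forall fun t => ?_)
  refine (hC _ fun j => by simp).trans_eq ?_
  have him : (fun j => (S j + δ t j * I).im) = (fun j => (S j).im) + δ t := by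
    funext j
    simp
  simp only [him, map_add, Pi.add_apply, add_div, add_assoc, c]

/-! ### Fourier inversion -/

section Inversion

variable {ι : Type*} [Fintype ι]

open scoped FourierTransform

theorem fourier_comp_ofLp_eq_laplace (h : (ι → ℝ) → ℂ) (w : EuclideanSpace ℝ ι) :
    𝓕 (h ∘ @WithLp.ofLp 2 (ι → ℝ)) w = laplace h fun j => ((-(2 * Real.pi)) • w.ofLp) j * I := by
  have hmp : MeasurePreserving (@WithLp.ofLp 2 (ι → ℝ)) := PiLp.volume_preserving_ofLp ι
  rw [Real.fourier_eq', laplace,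
    ← hmp.integral_comp (MeasurableEquiv.toLp 2 (ι → ℝ)).symm.measurableEmbedding]
  refine integral_congr_ae (Filter.Eventually.of_forall fun v => ?_)
  simp only [Function.comp_apply, smul_eq_mul, PiLp.inner_apply, Pi.smul_apply,
    RCLike.inner_apply, conj_trivial]
  push_cast
  rw [mul_comm, Finset.mul_sum, Finset.sum_mul]
  exact congrArg (h v.ofLp * cexp ·) (Finset.sum_congr rfl fun j _ => by ring)

theorem integral_laplace_mul_I {h : (ι → ℝ) → ℂ} (hh : Integrable h) (h0 : ContinuousAt h 0)
    (hL : Integrable fun t : ι → ℝ => laplace h fun j => t j * I) :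
    ∫ t : ι → ℝ, (laplace h fun j => t j * I) =
      (2 * Real.pi : ℂ) ^ Fintype.card ι * h 0 := by
  set F : (ι → ℝ) → ℂ := fun t => laplace h fun j => t j * I
  have hmp : MeasurePreserving (@WithLp.ofLp 2 (ι → ℝ)) := PiLp.volume_preserving_ofLp ι
  have hme : MeasurableEmbedding (@WithLp.ofLp 2 (ι → ℝ)) :=
    (MeasurableEquiv.toLp 2 (ι → ℝ)).symm.measurableEmbedding
  have hfourier : 𝓕 (h ∘ @WithLp.ofLp 2 (ι → ℝ)) =
      (fun t => F ((-(2 * Real.pi)) • t)) ∘ WithLp.ofLp :=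
    funext (fourier_comp_ofLp_eq_laplace h)
  have hFint : Integrable fun t => F ((-(2 * Real.pi)) • t) :=
    (integrable_comp_smul_iff volume F (neg_ne_zero.2 Real.two_pi_pos.ne')).2 hL
  have hinv := (hmp.integrable_comp_of_integrable hh).fourierInv_fourier_eq
    (hfourier ▸ hmp.integrable_comp_of_integrable hFint)
    (ContinuousAt.comp (f := @WithLp.ofLp 2 (ι → ℝ)) (x := 0) h0
      (PiLp.continuous_ofLp 2 _).continuousAt)
  rw [Real.fourierInv_eq', hfourier] at hinv
  simp only [inner_zero_right, mul_zero, ofReal_zero, zero_mul, Complex.exp_zero, one_smul,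
    Function.comp_apply, WithLp.ofLp_zero] at hinv
  rw [hmp.integral_comp hme fun t => F ((-(2 * Real.pi)) • t), Measure.integral_comp_smul,
    Module.finrank_fintype_fun_eq_card, abs_inv, abs_pow, abs_neg,
    abs_of_pos Real.two_pi_pos, Complex.real_smul] at hinv
  rw [← hinv]
  push_cast
  rw [mul_inv_cancel_left₀]
  exact pow_ne_zero _ (by exact_mod_cast Real.two_pi_pos.ne')

theorem integral_integral_prod_mul_cexp {V : Type*} [MeasurableSpace V] {μ : Measure V} [SFinite μ]
    {R : V → (ι → ℝ) → ℂ}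
    (hR : Integrable (fun z : V × (ι → ℝ) => R z.1 z.2) (μ.prod volume))
    (hRm : ∀ x, AEStronglyMeasurable (fun ξ => R ξ x) μ) (hRc : ∀ ξ, Continuous (R ξ))
    {G : V → ℝ} (hG : Integrable G μ) (hRG : ∀ ξ x, ‖R ξ x‖ ≤ G ξ)
    (hL : Integrable fun t : ι → ℝ =>
      ∫ z : V × (ι → ℝ), R z.1 z.2 * cexp (∑ j, t j * I * z.2 j) ∂(μ.prod volume)) :
    ∫ t : ι → ℝ, ∫ z : V × (ι → ℝ), R z.1 z.2 * cexp (∑ j, t j * I * z.2 j) ∂(μ.prod volume) =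
      (2 * Real.pi : ℂ) ^ Fintype.card ι * ∫ ξ, R ξ 0 ∂μ := by
  have hlaplace (t : ι → ℝ) :
      ∫ z : V × (ι → ℝ), R z.1 z.2 * cexp (∑ j, t j * I * z.2 j) ∂(μ.prod volume) =
        laplace (fun x => ∫ ξ, R ξ x ∂μ) fun j => t j * I := by
    rw [integral_prod_symm, laplace]
    · simp only [integral_mul_const]
    · refine hR.mul_bdd (c := 1) (by fun_prop) (Filter.Eventually.of_forall fun z => ?_)
      simp [norm_cexp_sum_mul_ofReal]
  simp only [hlaplace] at hL ⊢
  exact integral_laplace_mul_I hR.integral_prod_right (continuous_of_dominated hRm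
    (fun x => Filter.Eventually.of_forall fun ξ => hRG ξ x) hG
    (Filter.Eventually.of_forall hRc)).continuousAt hL

end Inversion

theorem measurePreserving_appendHomeomorph (m n : ℕ) :
    MeasurePreserving (Fin.appendHomeomorph (X := ℝ) m n).toMeasurableEquiv := by
  refine ⟨MeasurableEquiv.measurable _, (Measure.pi_eq fun s _ => ?_).symm⟩
  have hpre : (Fin.appendHomeomorph (X := ℝ) m n).toMeasurableEquiv ⁻¹' Set.univ.pi s =
      (Set.univ.pi fun i => s (Fin.castAdd n i)) ×ˢ Set.univ.pi fun i => s (Fin.natAdd m i) := by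
    ext z
    simp [Set.mem_pi, Fin.forall_fin_add]
  rw [MeasurableEquiv.map_apply, hpre, Measure.volume_eq_prod, Measure.prod_prod, volume_pi_pi,
    volume_pi_pi, Fin.prod_univ_add]

section Contour

variable {p q : ℕ}

/-- The direction in which the argument of the `U`-function of `GL (p + q + 2)` moves along the
contours: minus the first `p` variables, then `0` for the fixed coordinate, then the remaining
`q` variables. -/
def contourDir (p q : ℕ) : (Fin (p + q) → ℝ) →ₗ[ℝ] (Fin (p + 1 + q) → ℝ) :=
  LinearMap.pi (Fin.append (Fin.snoc (fun i => -LinearMap.proj (Fin.castAdd q i)) 0)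
    fun i => LinearMap.proj (Fin.natAdd p i))

theorem contourDir_castAdd_castSucc (t : Fin (p + q) → ℝ) (i : Fin p) :
    contourDir p q t (Fin.castAdd q i.castSucc) = -t (Fin.castAdd q i) := by
  simp [contourDir]

theorem contourDir_castAdd_last (t : Fin (p + q) → ℝ) :
    contourDir p q t (Fin.castAdd q (Fin.last p)) = 0 := by
  simp [contourDir]

theorem contourDir_natAdd (t : Fin (p + q) → ℝ) (i : Fin q) :
    contourDir p q t (Fin.natAdd (p + 1) i) = t (Fin.natAdd p i) := by
  simp [contourDir]

theorem contourDir_injective : Function.Injective (contourDir p q) := by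
  refine (injective_iff_map_eq_zero _).2 fun t ht => funext (Fin.addCases (fun i => ?_) fun i => ?_)
  · simpa [contourDir_castAdd_castSucc] using congrFun ht (Fin.castAdd q i.castSucc)
  · simpa [contourDir_natAdd] using congrFun ht (Fin.natAdd (p + 1) i)

/-- Coordinates `(ξ, x)` on the domain of `(y, u) ↦ Ψ y * Φ u` in which the phase
`∑ contourDir t * y + ∑ t * u` depends on `x` only. -/
def contourCoord (p q : ℕ) (z : (Fin (p + 1) → ℝ) × (Fin (p + q) → ℝ)) :
    (Fin (p + 1 + q) → ℝ) × (Fin p → ℝ) :=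
  (Fin.append z.1 fun i => z.2 (Fin.natAdd p i),
    fun i => z.2 (Fin.castAdd q i) + z.1 i.castSucc)

theorem contourCoord_zero_right (ξ : Fin (p + 1) → ℝ) :
    contourCoord p q (ξ, 0) = (Fin.append ξ 0, fun i => ξ i.castSucc) :=
  Prod.ext rfl (funext fun i => zero_add (ξ i.castSucc))

theorem continuous_contourCoord : Continuous (contourCoord p q) := by
  have := Fin.continuous_append (X := ℝ) (p + 1) q
  unfold contourCoord
  fun_prop

theorem sum_contourDir_mul_contourCoord (t : Fin (p + q) → ℝ)
    (z : (Fin (p + 1) → ℝ) × (Fin (p + q) → ℝ)) :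
    ∑ j, contourDir p q t j * I * (contourCoord p q z).1 j +
        ∑ i, t (Fin.castAdd q i) * I * (contourCoord p q z).2 i = ∑ j, t j * I * z.2 j := by
  simp only [contourCoord, Fin.sum_univ_add (b := q), Fin.sum_univ_castSucc (n := p),
    contourDir_castAdd_castSucc, contourDir_castAdd_last, contourDir_natAdd, Fin.append_left,
    Fin.append_right]
  push_cast
  simp only [neg_mul, mul_add, zero_mul, Finset.sum_neg_distrib, Finset.sum_add_distrib]
  ring

theorem measurePreserving_contourCoord : MeasurePreserving (contourCoord p q) := by
  have hsplit := (MeasurePreserving.id (volume : Measure (Fin (p + 1) → ℝ))).prod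
    ((Measure.measurePreserving_swap (μ := (volume : Measure (Fin p → ℝ)))
      (ν := (volume : Measure (Fin q → ℝ)))).comp (measurePreserving_appendHomeomorph p q).symm)
  have hassoc := (measurePreserving_prodAssoc (volume : Measure (Fin (p + 1) → ℝ))
    (volume : Measure (Fin q → ℝ)) (volume : Measure (Fin p → ℝ))).symm
  have happend := (measurePreserving_appendHomeomorph (p + 1) q).prod
    (MeasurePreserving.id (volume : Measure (Fin p → ℝ)))
  have hshear := measurePreserving_shear (volume : Measure (Fin (p + 1 + q) → ℝ))
    (L := fun y (i : Fin p) => y (Fin.castAdd q i.castSucc)) (by fun_prop)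
  refine (hshear.comp (happend.comp (hassoc.comp hsplit))).congr
    continuous_contourCoord.measurable (Filter.Eventually.of_forall fun z => ?_)
  refine Prod.ext rfl (funext fun i => congrArg (z.2 (Fin.castAdd q i) + ·) ?_)
  exact Fin.append_left z.1 _ i.castSucc

theorem laplace_mul_laplace_eq_integral_contourCoord {Ψ : (Fin (p + 1 + q) → ℝ) → ℂ}
    {Φ : (Fin p → ℝ) → ℂ} (hΨ : Continuous Ψ) (hΦ : Continuous Φ) (S : Fin (p + 1 + q) → ℂ)
    (T : Fin p → ℂ) (t : Fin (p + q) → ℝ) :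
    (laplace Ψ fun j => S j + contourDir p q t j * I) *
        laplace Φ (fun i => T i + t (Fin.castAdd q i) * I) =
      ∫ z, Ψ (contourCoord p q z).1 * cexp (∑ j, S j * (contourCoord p q z).1 j) *
        (Φ (contourCoord p q z).2 * cexp (∑ i, T i * (contourCoord p q z).2 i)) *
          cexp (∑ j, t j * I * z.2 j) := by
  rw [laplace, laplace, ← integral_prod_mul, ← Measure.volume_eq_prod,
    ← measurePreserving_contourCoord.map_eq,
    integral_map measurePreserving_contourCoord.aemeasurable (by fun_prop)]
  refine integral_congr_ae (Filter.Eventually.of_forall fun z => ?_)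
  simp only [← sum_contourDir_mul_contourCoord, add_mul, Finset.sum_add_distrib, Complex.exp_add]
  ring

theorem integrable_laplace_mul_laplace {Ψ : (Fin (p + 1 + q) → ℝ) → ℂ} {Φ : (Fin p → ℝ) → ℂ}
    {S : Fin (p + 1 + q) → ℂ} {T : Fin p → ℂ}
    (hΨ : Integrable fun t => laplace Ψ fun j => S j + contourDir p q t j * I)
    (hΦ : IsExpDominated Φ) (hT : ∀ i, 0 < (T i).re) :
    Integrable fun t => (laplace Ψ fun j => S j + contourDir p q t j * I) *
      laplace Φ fun i => T i + t (Fin.castAdd q i) * I := by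
  have hcont : Continuous fun t : Fin (p + q) → ℝ =>
      laplace Φ fun i => T i + t (Fin.castAdd q i) * I :=
    (hΦ.continuous_laplace hT).comp (g := fun y => laplace Φ fun i => T i + y i * I)
      (f := fun (t : Fin (p + q) → ℝ) i => t (Fin.castAdd q i)) (by fun_prop)
  exact hΨ.mul_bdd hcont.aestronglyMeasurable
    (Filter.Eventually.of_forall fun t => norm_laplace_add_mul_I_le Φ T _)

theorem exists_norm_contourCoord_mul_cexp_le {Ψ : (Fin (p + 1 + q) → ℝ) → ℂ}
    {Φ : (Fin p → ℝ) → ℂ} (hΨ : IsExpDominated Ψ) (hΦ : IsExpDominated Φ)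
    {S : Fin (p + 1 + q) → ℂ} {T : Fin p → ℂ} (hS : ∀ j, 0 < (S j).re) (hT : ∀ i, 0 < (T i).re) :
    ∃ C : ℝ, ∀ z, ‖Ψ (contourCoord p q z).1 * cexp (∑ j, S j * (contourCoord p q z).1 j) *
        (Φ (contourCoord p q z).2 * cexp (∑ i, T i * (contourCoord p q z).2 i))‖ ≤
      (∏ j, Real.exp (-((S (Fin.castAdd q j)).re / 2 * |z.1 j|))) * C := by
  obtain ⟨C, hC⟩ := hΨ.exists_norm_mul_cexp_le hS
  obtain ⟨D, hD⟩ := hΦ.exists_norm_mul_cexp_le hT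
  refine ⟨C * D, fun z => ?_⟩
  have hCz := hC (Finset.univ.map (Fin.castAddEmb q)) (contourCoord p q z).1
  have hDz := hD ∅ (contourCoord p q z).2
  rw [Finset.prod_empty, one_mul] at hDz
  refine (norm_mul_le_of_le hCz hDz).trans_eq ?_
  simp only [contourCoord, Finset.prod_map, Fin.castAddEmb_apply, Fin.append_left, mul_assoc]

theorem integral_laplace_mul_laplace {Ψ : (Fin (p + 1 + q) → ℝ) → ℂ} {Φ : (Fin p → ℝ) → ℂ}
    (hΨ : IsExpDominated Ψ) (hΦ : IsExpDominated Φ) {S : Fin (p + 1 + q) → ℂ} {T : Fin p → ℂ}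
    (hS : ∀ j, 0 < (S j).re) (hT : ∀ i, 0 < (T i).re)
    (hint : Integrable fun t => laplace Ψ fun j => S j + contourDir p q t j * I) :
    ∫ t, (laplace Ψ fun j => S j + contourDir p q t j * I) *
        laplace Φ (fun i => T i + t (Fin.castAdd q i) * I) =
      (2 * Real.pi : ℂ) ^ (p + q) * ∫ ξ : Fin (p + 1) → ℝ,
        Ψ (Fin.append ξ 0) * Φ (fun i => ξ i.castSucc) *
          cexp (∑ j, S (Fin.castAdd q j) * ξ j + ∑ i, T i * ξ i.castSucc) := by
  have hΨc := hΨ.continuous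
  have hΦc := hΦ.continuous
  let P : (Fin (p + 1 + q) → ℝ) × (Fin p → ℝ) → ℂ := fun w =>
    Ψ w.1 * cexp (∑ j, S j * w.1 j) * (Φ w.2 * cexp (∑ i, T i * w.2 i))
  have hP : Integrable P := (hΨ.integrable_mul_cexp hS).mul_prod (hΦ.integrable_mul_cexp hT)
  have hPc : Continuous (P ∘ contourCoord p q) :=
    Continuous.comp (by fun_prop) continuous_contourCoord
  obtain ⟨C, hC⟩ := exists_norm_contourCoord_mul_cexp_le hΨ hΦ hS hT
  have hprod := integrable_laplace_mul_laplace hint hΦ hT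
  simp only [laplace_mul_laplace_eq_integral_contourCoord hΨc hΦc] at hprod ⊢
  have hinv := integral_integral_prod_mul_cexp (R := fun ξ x => P (contourCoord p q (ξ, x)))
    (measurePreserving_contourCoord.integrable_comp_of_integrable hP)
    (fun x => (hPc.comp (by fun_prop)).aestronglyMeasurable)
    (fun ξ => hPc.comp (by fun_prop))
    ((integrable_prod_exp_neg_mul_abs fun j => half_pos (hS _)).mul_const C)
    (fun ξ x => hC (ξ, x)) hprod
  rw [Fintype.card_fin] at hinv
  refine hinv.trans (congrArg ((2 * Real.pi : ℂ) ^ (p + q) * ·) (integral_congr_ae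
    (Filter.Eventually.of_forall fun ξ => ?_)))
  simp only [P, contourCoord_zero_right, Fin.sum_univ_add (b := q), Complex.exp_add,
    Fin.append_left, Fin.append_right, Pi.zero_apply, ofReal_zero, mul_zero,
    Finset.sum_const_zero, Complex.exp_zero, mul_one]
  ring

end Contour

/-! ### The Barnes integral -/

section Barnes

variable {p q : ℕ}

/-- The arguments of the `U`-function of `GL n` in the Barnes integral of a `GL n × GL (p + 1)`
zeta integral at `s`, as a function of the contour variables `z`; the variable `ν` stands for
the sum of the parameters on `GL (p + 1)`. -/
def barnesArg (p : ℕ) (s ν : ℂ) (z : ℕ → ℂ) (j : ℕ) : ℂ :=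
  if j < p then ((j + 1 : ℕ) : ℂ) * s - z j
  else if j = p then ((p + 1 : ℕ) : ℂ) * s + ν
  else z (j - 1)

theorem extR0_coe {k : ℕ} (t : Fin k → ℝ) (i : Fin k) : extR0 t i = t i :=
  dif_pos i.is_lt

theorem append_zero_eq_extR0 (ξ : Fin (p + 1) → ℝ) :
    Fin.append ξ (0 : Fin q → ℝ) = fun j : Fin (p + 1 + q) => extR0 ξ j := by
  funext j
  induction j using Fin.addCases with
  | left i => rw [Fin.append_left, Fin.val_castAdd, extR0_coe]
  | right i =>
    rw [Fin.append_right, Fin.val_natAdd, extR0, dif_neg (by omega), Pi.zero_apply]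

theorem barnesArg_line (s ν : ℂ) (c : ℕ → ℂ) (t : Fin (p + q) → ℝ) (j : Fin (p + 1 + q)) :
    barnesArg p s ν (fun i => c i + extR0 t i * I) j =
      barnesArg p s ν c j + contourDir p q t j * I := by
  induction j using Fin.addCases with
  | left j =>
    induction j using Fin.lastCases with
    | last => simp [barnesArg, contourDir_castAdd_last]
    | cast i =>
      have ht : extR0 t i = t (Fin.castAdd q i) := extR0_coe t (Fin.castAdd q i)
      simp only [barnesArg, contourDir_castAdd_castSucc, Fin.val_castAdd, Fin.val_castSucc,
        Fin.is_lt, if_true, ht]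
      push_cast
      ring
  | right i =>
    have hi : p + 1 + (i : ℕ) - 1 = p + i := by omega
    have ht : extR0 t (p + i) = t (Fin.natAdd p i) := extR0_coe t (Fin.natAdd p i)
    rw [contourDir_natAdd, Fin.val_natAdd, barnesArg, barnesArg, if_neg (by omega),
      if_neg (by omega), if_neg (by omega), if_neg (by omega), hi, ht]

theorem sum_barnesArg_add_sum (s ν : ℂ) (c : ℕ → ℂ) (ξ : Fin (p + 1) → ℝ) :
    ∑ j : Fin (p + 1), barnesArg p s ν c j * ξ j + ∑ i : Fin p, c i * ξ i.castSucc =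
      ν * ξ (Fin.last p) + ∑ j : Fin (p + 1), ((j + 1 : ℕ) : ℂ) * s * ξ j := by
  simp only [Fin.sum_univ_castSucc, barnesArg, Fin.val_castSucc, Fin.val_last, Fin.is_lt,
    lt_irrefl, if_true, if_false, sub_mul, Finset.sum_sub_distrib]
  ring

theorem integral_Ufun_mul_Ufun {a a' : ℕ → ℂ} (ha : ∀ j < p + 1 + q + 1, (a j).re = 0)
    (ha' : ∀ j < p + 1, (a' j).re = 0) {s ν : ℂ} {c : ℕ → ℝ} (hc : ∀ j < p, 0 < c j)
    (hS : ∀ j < p + 1 + q, 0 < (barnesArg p s ν (fun i => c i) j).re) :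
    ∫ t : Fin (p + q) → ℝ,
        Ufun (p + 1 + q + 1) a (barnesArg p s ν fun i => c i + extR0 t i * I) *
          Ufun (p + 1) a' (fun i => c i + extR0 t i * I) =
      (2 * Real.pi : ℂ) ^ (p + q) * ∫ ξ : Fin (p + 1) → ℝ,
        logWhitt (p + 1 + q) a (fun j => extR0 ξ j) * logWhitt p a' (fun i => ξ i.castSucc) *
          cexp (ν * ξ (Fin.last p) + ∑ j : Fin (p + 1), ((j + 1 : ℕ) : ℂ) * s * ξ j) := by
  have hS' (j : Fin (p + 1 + q)) := hS j j.is_lt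
  have hΨ := isLogWhittaker_logWhitt ha
  have key := integral_laplace_mul_laplace hΨ.isExpDominated
    (isLogWhittaker_logWhitt ha').isExpDominated hS'
    (T := fun i : Fin p => (c i : ℂ)) (fun i => hc i i.is_lt)
    (hΨ.integrable_laplace_comp hS' contourDir_injective)
  have hextR0 (t : Fin (p + q) → ℝ) (i : Fin p) : extR0 t i = t (Fin.castAdd q i) :=
    extR0_coe t (Fin.castAdd q i)
  simpa only [Ufun_eq_laplace, barnesArg_line, hextR0, Fin.val_castAdd, sum_barnesArg_add_sum,
    append_zero_eq_extR0] using key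

end Barnes

/-- Barnes integral expression for the archimedean `GL_n × GL_m` zeta integral
(Proposition 2.1(2) of Ishii–Stade).  The `n-2` integration variables are
ordered as `s_1,…,s_{m-1},s_{m+1},…,s_{n-1}`. -/
theorem gl_glm_zeta_barnes (n m : ℕ) (hn : 2 ≤ n) (hm1 : 1 ≤ m) (hm2 : m ≤ n - 1)
    (a a' : ℕ → ℂ) (ha : ∀ j < n, (a j).re = 0) (ha' : ∀ j < m, (a' j).re = 0)
    (s : ℂ) (hs : 0 < s.re) (c : ℕ → ℝ)
    (hc1 : ∀ j < m - 1, 0 < c j)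
    (hc2 : ∀ j < n - 1,
      0 < ((if j < m - 1 then ((j + 1 : ℕ) : ℂ) * s - (c j : ℂ)
            else if j = m - 1 then (m : ℂ) * s + sumA m a'
            else (c (j - 1) : ℂ)) : ℂ).re)
    (hc3 : ∀ j, m ≤ j → j < n - 1 → 0 < c (j - 1)) :
    zetaGLm n m a a' s =
      (2 : ℂ) ^ m / (2 * (Real.pi : ℂ) * Complex.I) ^ (n - 2) *
        VIntK (n - 2) c (fun z =>
          Ufun n a (fun j =>
              if j < m - 1 then ((j + 1 : ℕ) : ℂ) * s - z j
              else if j = m - 1 then (m : ℂ) * s + sumA m a'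
              else z (j - 1)) *
            Ufun m a' z) := by
  obtain ⟨p, rfl⟩ : ∃ p, m = p + 1 := ⟨m - 1, by omega⟩
  obtain ⟨q, rfl⟩ : ∃ q, n = p + 1 + q + 1 := ⟨n - (p + 2), by omega⟩
  have hpi : (2 * Real.pi : ℂ) ≠ 0 := by exact_mod_cast Real.two_pi_pos.ne'
  have hU := integral_Ufun_mul_Ufun ha ha' hc1 hc2
  rw [show p + 1 + q + 1 - 2 = p + q by omega, VIntK,
    zetaGLm_eq_integral_logWhitt (by omega : p < p + 1 + q)]
  refine Eq.trans ?_ (congrArg (fun J => (2 : ℂ) ^ (p + 1) / (2 * Real.pi * I) ^ (p + q) *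
    (I ^ (p + q) * J)) hU.symm)
  rw [mul_pow (2 * Real.pi : ℂ), ← mul_assoc (I ^ (p + q)), mul_comm (I ^ (p + q)), ← mul_assoc,
    div_mul_cancel₀ _ (mul_ne_zero (pow_ne_zero _ hpi) (pow_ne_zero _ I_ne_zero))]

end
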